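/- arXiv:2102.08527 — 12 statements merged into one kernel-verified Lean document; each statement's English description precedes it below -/
import Mathlib

section
/- Every torsion class 𝒯 in mod A is determined by the bricks it contains: 𝒯 equals the smallest torsion class containing the set of bricks belonging to 𝒯; equivalently, in tors A, 𝒯 = ⋁_{B a brick, B ∈ 𝒯} T(B). -/
open CategoryTheory

/-- `𝒯` is a torsion class of finite-dimensional (= finitely generated) left `A`-modules:
a class of finitely generated modules, closed under isomorphism, containing `0`,
closed under quotients and closed under extensions. -/
def IsTorsionClass (A : Type) [Ring A] (𝒯 : Set (ModuleCat.{0} A)) : Prop :=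
  (∀ M ∈ 𝒯, Module.Finite A M) ∧
  (∀ M ∈ 𝒯, ∀ N : ModuleCat.{0} A, Nonempty (M ≃ₗ[A] N) → N ∈ 𝒯) ∧
  (∃ Z ∈ 𝒯, Subsingleton Z) ∧
  (∀ M ∈ 𝒯, ∀ N : ModuleCat.{0} A, ∀ f : M →ₗ[A] N, Function.Surjective f → N ∈ 𝒯) ∧
  (∀ X Y Z : ModuleCat.{0} A, X ∈ 𝒯 → Z ∈ 𝒯 →
    ∀ (f : X →ₗ[A] Y) (g : Y →ₗ[A] Z), Function.Injective f → Function.Surjective g →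
      LinearMap.range f = LinearMap.ker g → Y ∈ 𝒯)

/-- `ℱ` is a torsion-free class: closed under isomorphism, containing `0`,
closed under submodules and closed under extensions. -/
def IsTorsionFreeClass (A : Type) [Ring A] (ℱ : Set (ModuleCat.{0} A)) : Prop :=
  (∀ M ∈ ℱ, Module.Finite A M) ∧
  (∀ M ∈ ℱ, ∀ N : ModuleCat.{0} A, Nonempty (M ≃ₗ[A] N) → N ∈ ℱ) ∧
  (∃ Z ∈ ℱ, Subsingleton Z) ∧
  (∀ M ∈ ℱ, ∀ N : ModuleCat.{0} A, ∀ f : N →ₗ[A] M, Function.Injective f → N ∈ ℱ) ∧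
  (∀ X Y Z : ModuleCat.{0} A, X ∈ ℱ → Z ∈ ℱ →
    ∀ (f : X →ₗ[A] Y) (g : Y →ₗ[A] Z), Function.Injective f → Function.Surjective g →
      LinearMap.range f = LinearMap.ker g → Y ∈ ℱ)

/-- `𝒞⊥ = {Y | Hom(X,Y) = 0 for all X ∈ 𝒞}` (within finite-dimensional modules). -/
def rightPerp (A : Type) [Ring A] (𝒞 : Set (ModuleCat.{0} A)) : Set (ModuleCat.{0} A) :=
  {Y | Module.Finite A Y ∧ ∀ X ∈ 𝒞, ∀ f : X →ₗ[A] Y, f = 0}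

/-- `⊥𝒞 = {X | Hom(X,Y) = 0 for all Y ∈ 𝒞}` (within finite-dimensional modules). -/
def leftPerp (A : Type) [Ring A] (𝒞 : Set (ModuleCat.{0} A)) : Set (ModuleCat.{0} A) :=
  {X | Module.Finite A X ∧ ∀ Y ∈ 𝒞, ∀ f : X →ₗ[A] Y, f = 0}

/-- A brick: a nonzero finite-dimensional module all of whose nonzero endomorphisms
are invertible. -/
def IsBrick (A : Type) [Ring A] (B : ModuleCat.{0} A) : Prop :=
  Module.Finite A B ∧ Nontrivial B ∧ ∀ f : B →ₗ[A] B, f ≠ 0 → Function.Bijective f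

/-- `T(𝒞)`, the smallest torsion class containing `𝒞`. -/
def TgenSet (A : Type) [Ring A] (𝒞 : Set (ModuleCat.{0} A)) : Set (ModuleCat.{0} A) :=
  {X | ∀ 𝒯, IsTorsionClass A 𝒯 → 𝒞 ⊆ 𝒯 → X ∈ 𝒯}

/-- `T(B)`, the smallest torsion class containing the module `B`. -/
def Tgen (A : Type) [Ring A] (B : ModuleCat.{0} A) : Set (ModuleCat.{0} A) :=
  TgenSet A {B}

/-- `F(B)`, the smallest torsion-free class containing the module `B`. -/
def Fgen (A : Type) [Ring A] (B : ModuleCat.{0} A) : Set (ModuleCat.{0} A) :=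
  {X | ∀ ℱ, IsTorsionFreeClass A ℱ → B ∈ ℱ → X ∈ ℱ}

/-- The join of a family of torsion classes in `tors A`: the intersection of all torsion
classes containing every member of the family. -/
def torsJoin (A : Type) [Ring A] (S : Set (Set (ModuleCat.{0} A))) : Set (ModuleCat.{0} A) :=
  {M | ∀ 𝒲, IsTorsionClass A 𝒲 → (∀ 𝒯 ∈ S, 𝒯 ⊆ 𝒲) → M ∈ 𝒲}
theorem torsionClass_eq_Tgen_of_bricks
    (k A : Type) [Field k] [Ring A] [Algebra k A] [FiniteDimensional k A]
    (𝒯 : Set (ModuleCat.{0} A)) (h𝒯 : IsTorsionClass A 𝒯) :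
    𝒯 = TgenSet A {B ∈ 𝒯 | IsBrick A B} := by
  apply Set.Subset.antisymm
  swap
  · intro X hX
    exact hX 𝒯 h𝒯 (fun B hB => hB.1)
  intro M hM 𝒲 h𝒲 hB
  obtain ⟨hTfin, -, -, hTquot, -⟩ := h𝒯
  obtain ⟨-, -, ⟨Z, hZ, hZs⟩, hWquot, hWext⟩ := h𝒲
  have hArt : IsArtinianRing A := IsArtinianRing.of_finite k A
  have : Module.Finite A M := hTfin M hM
  -- every quotient of `M` lies in `𝒲`, by Noetherian induction
  have key : ∀ N : Submodule A M, ModuleCat.of A (M ⧸ N) ∈ 𝒲 := by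
    intro N
    induction N using WellFoundedGT.induction with
    | ind N ih =>
    have hQT : ModuleCat.of A (M ⧸ N) ∈ 𝒯 := hTquot M hM (ModuleCat.of A (M ⧸ N)) N.mkQ N.mkQ_surjective
    -- proper quotients of `M ⧸ N` lie in `𝒲`
    have hprop : ∀ P : Submodule A (M ⧸ N), P ≠ ⊥ → ModuleCat.of A ((M ⧸ N) ⧸ P) ∈ 𝒲 := by
      intro P hP
      have hlt : N < P.comap N.mkQ := by
        refine lt_of_le_of_ne (Submodule.le_comap_mkQ N P) ?_
        intro h
        apply hP
        rw [← Submodule.map_comap_eq_of_surjective N.mkQ_surjective P, ← h]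
        simp
      refine hWquot _ (ih _ hlt) (ModuleCat.of A ((M ⧸ N) ⧸ P))
        (Submodule.mapQ (P.comap N.mkQ) P N.mkQ le_rfl) ?_
      intro y
      obtain ⟨x, rfl⟩ := P.mkQ_surjective y
      obtain ⟨m, rfl⟩ := N.mkQ_surjective x
      exact ⟨Submodule.Quotient.mk m, rfl⟩
    rcases subsingleton_or_nontrivial (M ⧸ N) with hs | hn
    · exact hWquot Z hZ (ModuleCat.of A (M ⧸ N)) 0 (fun y => ⟨0, Subsingleton.elim (α := M ⧸ N) _ _⟩)
    by_cases hbr : ∀ f : (M ⧸ N) →ₗ[A] (M ⧸ N), f ≠ 0 → Function.Injective f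
    · refine hB ⟨hQT, hTfin _ hQT, hn, fun f hf => ?_⟩
      exact IsArtinian.bijective_of_injective_endomorphism (M := M ⧸ N) f (hbr f hf)
    · push Not at hbr
      obtain ⟨f, hf0, hfi⟩ := hbr
      have h1 : ModuleCat.of A (LinearMap.range f) ∈ 𝒲 := by
        refine hWquot _ (hprop (LinearMap.ker f) ?_) (ModuleCat.of A (LinearMap.range f))
          f.quotKerEquivRange.toLinearMap f.quotKerEquivRange.surjective
        rwa [Ne, LinearMap.ker_eq_bot]
      have h2 := hprop (LinearMap.range f) (by rwa [Ne, LinearMap.range_eq_bot])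
      refine hWext _ (ModuleCat.of A (M ⧸ N)) _ h1 h2 (LinearMap.range f).subtype
        (LinearMap.range f).mkQ (Submodule.injective_subtype _) (Submodule.mkQ_surjective _) ?_
      exact (Submodule.range_subtype _).trans (Submodule.ker_mkQ _).symm
  exact hWquot _ (key ⊥) M (Submodule.quotEquivOfEqBot ⊥ rfl).toLinearMap
    (Submodule.quotEquivOfEqBot ⊥ rfl).surjective
end

section
/- (Asai's lemma) Let B be a brick and let X be a module in T(B), the smallest torsion class containing B. Then either there exists a surjective A-module homomorphism X ↠ B, or Hom_A(X,B) = 0. -/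
open CategoryTheory

theorem asai_lemma
    (k A : Type) [Field k] [Ring A] [Algebra k A] [FiniteDimensional k A]
    (B X : ModuleCat.{0} A) (hB : IsBrick A B) (hX : X ∈ Tgen A B) :
    (∃ f : X →ₗ[A] B, Function.Surjective f) ∨ (∀ f : X →ₗ[A] B, f = 0) := by
  let P : Set (ModuleCat.{0} A) :=
    {M | Module.Finite A M ∧ ∀ f : M →ₗ[A] B, f = 0 ∨ Function.Surjective f}
  have hq : ∀ M ∈ P, ∀ N : ModuleCat.{0} A, ∀ f : M →ₗ[A] N, Function.Surjective f → N ∈ P := by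
    rintro M ⟨hM, hM'⟩ N f hf
    refine ⟨Module.Finite.of_surjective f hf, fun g => ?_⟩
    rcases hM' (g.comp f) with h | h
    · left
      ext y
      obtain ⟨x, rfl⟩ := hf y
      exact LinearMap.congr_fun h x
    · right
      intro b
      obtain ⟨x, hx⟩ := h b
      exact ⟨f x, hx⟩
  have hP : IsTorsionClass A P := by
    refine ⟨fun M hM => hM.1, ?_, ?_, hq, ?_⟩
    · rintro M hM N ⟨e⟩
      exact hq M hM N e.toLinearMap e.surjective
    · refine ⟨ModuleCat.of A PUnit, ⟨?_, fun f => Or.inl ?_⟩, ?_⟩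
      · exact (inferInstance : Module.Finite A PUnit)
      · apply LinearMap.ext
        intro x
        have : x = 0 := rfl
        rw [this, map_zero, map_zero]
      · exact (inferInstance : Subsingleton PUnit)
    · rintro X Y Z ⟨hX, hX'⟩ ⟨hZ, hZ'⟩ f g hf hg hfg
      refine ⟨?_, fun h => ?_⟩
      · refine ⟨Submodule.fg_of_fg_map_of_fg_inf_ker g ?_ ?_⟩
        · rw [Submodule.map_top, LinearMap.range_eq_top.2 hg]
          exact hZ.1
        · rw [top_inf_eq, ← hfg, ← Submodule.map_top]
          exact hX.1.map f
      · rcases hX' (h.comp f) with h0 | h0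
        · have hk : LinearMap.ker g ≤ LinearMap.ker h := by
            rw [← hfg]
            rintro _ ⟨x, rfl⟩
            exact LinearMap.congr_fun h0 x
          let e := g.quotKerEquivOfSurjective hg
          let h' : Z →ₗ[A] B := ((LinearMap.ker g).liftQ h hk).comp e.symm.toLinearMap
          have hh : ∀ y, h' (g y) = h y := by
            intro y
            have : e.symm (g y) = (LinearMap.ker g).mkQ y := by
              rw [LinearEquiv.symm_apply_eq]
              rfl
            simp [h', this]
          rcases hZ' h' with h1 | h1
          · left
            ext y
            rw [← hh, h1]
            rfl
          · right
            intro b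
            obtain ⟨z, rfl⟩ := h1 b
            obtain ⟨y, rfl⟩ := hg z
            exact ⟨y, (hh y).symm⟩
        · right
          intro b
          obtain ⟨x, hx⟩ := h0 b
          exact ⟨f x, hx⟩
  have hBP : B ∈ P := by
    refine ⟨hB.1, fun f => ?_⟩
    by_cases h : f = 0
    · exact Or.inl h
    · exact Or.inr (hB.2.2 f h).surjective
  have hXP : X ∈ P := hX P hP (Set.singleton_subset_iff.2 hBP)
  by_cases h : ∀ f : X →ₗ[A] B, f = 0
  · exact Or.inr h
  · obtain ⟨f, hf⟩ := not_forall.1 h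
    exact Or.inl ⟨f, (hXP.2 f).resolve_left hf⟩
end

section
/- (Barnard–Carroll–Zhu) The map B ↦ T(B) induces a bijection from the set of isomorphism classes of bricks of mod A to the set of completely join irreducible elements of the complete lattice tors A: for every brick B the torsion class T(B) is completely join irreducible, every completely join irreducible torsion class is of the form T(B) for some brick B, and T(B) = T(B') implies B ≅ B'. -/
open CategoryTheory

/-- A completely join irreducible element of the lattice of torsion classes:
a torsion class `𝒥` possessing a torsion class `𝒥₊` such that, for every torsion class
`𝒴`, `𝒴 ⊊ 𝒥` if and only if `𝒴 ⊆ 𝒥₊`. -/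
def IsCJITors (A : Type) [Ring A] (𝒥 : Set (ModuleCat.{0} A)) : Prop :=
  IsTorsionClass A 𝒥 ∧ ∃ 𝒥s, IsTorsionClass A 𝒥s ∧
    ∀ 𝒴, IsTorsionClass A 𝒴 → (𝒴 ⊂ 𝒥 ↔ 𝒴 ⊆ 𝒥s)

section helpers

variable {A : Type} [Ring A]

theorem finiteClass_isTorsionClass :
    IsTorsionClass A {M : ModuleCat.{0} A | Module.Finite A M} := by
  refine ⟨fun M h => h, ?_, ?_, ?_, ?_⟩
  · rintro M hM N ⟨e⟩
    have : Module.Finite A M := hM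
    exact Module.Finite.equiv e
  · exact ⟨ModuleCat.of A PUnit, (inferInstance : Module.Finite A PUnit),
      (inferInstance : Subsingleton PUnit)⟩
  · intro M hM N f hf
    have : Module.Finite A M := hM
    exact Module.Finite.of_surjective f hf
  · intro X Y Z hX hZ f g hf hg hfg
    have hX : Module.Finite A X := hX
    have hZ : Module.Finite A Z := hZ
    have h1 : Module.Finite A (LinearMap.range f) := inferInstance
    have h2 : (LinearMap.ker g).FG := by
      rw [← hfg]; exact Module.Finite.iff_fg.mp h1
    refine ⟨Submodule.fg_of_fg_map_of_fg_inf_ker g ?_ ?_⟩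
    · rw [Submodule.map_top, LinearMap.range_eq_top.mpr hg]
      exact hZ.fg_top
    · simpa using h2

theorem Tgen_isTorsionClass (B : ModuleCat.{0} A) (hB : Module.Finite A B) :
    IsTorsionClass A (Tgen A B) := by
  refine ⟨?_, ?_, ?_, ?_, ?_⟩
  · intro M hM
    exact hM _ finiteClass_isTorsionClass (by rintro _ rfl; exact hB)
  · intro M hM N e 𝒯 h𝒯 hB
    exact h𝒯.2.1 M (hM 𝒯 h𝒯 hB) N e
  · refine ⟨ModuleCat.of A PUnit, ?_, (inferInstance : Subsingleton PUnit)⟩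
    intro 𝒯 h𝒯 hB
    exact h𝒯.2.2.2.1 B (hB rfl) _ (0 : B →ₗ[A] PUnit) (fun x => ⟨0, rfl⟩)
  · intro M hM N f hf 𝒯 h𝒯 hB
    exact h𝒯.2.2.2.1 M (hM 𝒯 h𝒯 hB) N f hf
  · intro X Y Z hX hZ f g hf hg hfg 𝒯 h𝒯 hB
    exact h𝒯.2.2.2.2 X Y Z (hX 𝒯 h𝒯 hB) (hZ 𝒯 h𝒯 hB) f g hf hg hfg

theorem mem_Tgen (B : ModuleCat.{0} A) : B ∈ Tgen A B := fun _ _ h => h rfl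

theorem Tgen_le {B : ModuleCat.{0} A} {𝒯 : Set (ModuleCat.{0} A)} (h : IsTorsionClass A 𝒯)
    (hB : B ∈ 𝒯) : Tgen A B ⊆ 𝒯 :=
  fun _ hM => hM 𝒯 h (by rintro _ rfl; exact hB)

/-- A map out of the middle term of an exact sequence that kills the sub factors. -/
theorem factor_of_exact {X Y Z B : Type} [AddCommGroup X] [AddCommGroup Y] [AddCommGroup Z]
    [AddCommGroup B] [Module A X] [Module A Y] [Module A Z] [Module A B]
    (f : X →ₗ[A] Y) (g : Y →ₗ[A] Z) (hg : Function.Surjective g)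
    (hfg : LinearMap.range f = LinearMap.ker g) (u : Y →ₗ[A] B) (hu : u ∘ₗ f = 0) :
    ∃ v : Z →ₗ[A] B, v ∘ₗ g = u := by
  have hk : LinearMap.ker g ≤ LinearMap.ker u := by
    rw [← hfg]
    rintro _ ⟨x, rfl⟩
    exact LinearMap.congr_fun hu x
  refine ⟨(LinearMap.ker g).liftQ u hk ∘ₗ (g.quotKerEquivOfSurjective hg).symm.toLinearMap, ?_⟩
  ext y
  have : (g.quotKerEquivOfSurjective hg).symm (g y) = (LinearMap.ker g).mkQ y := by
    rw [LinearEquiv.symm_apply_eq]; rfl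
  simp [this]

theorem leftPerp_isTorsionClass (B : ModuleCat.{0} A) :
    IsTorsionClass A (leftPerp A {B}) := by
  have hF := finiteClass_isTorsionClass (A := A)
  have hq : ∀ M ∈ leftPerp A {B}, ∀ N : ModuleCat.{0} A, ∀ f : M →ₗ[A] N,
      Function.Surjective f → N ∈ leftPerp A {B} := by
    intro M hM N f hf
    refine ⟨hF.2.2.2.1 M hM.1 N f hf, ?_⟩
    rintro _ rfl u
    have := hM.2 _ rfl (u ∘ₗ f)
    ext n
    obtain ⟨m, rfl⟩ := hf n
    exact LinearMap.congr_fun this m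
  refine ⟨fun M h => h.1, ?_, ?_, hq, ?_⟩
  · rintro M hM N ⟨e⟩
    exact hq M hM N e.toLinearMap e.surjective
  · refine ⟨ModuleCat.of A PUnit, ⟨(inferInstance : Module.Finite A PUnit), ?_⟩,
      (inferInstance : Subsingleton PUnit)⟩
    intro Y _ u
    ext x
    exact u.map_zero
  · intro X Y Z hX hZ f g hf hg hfg
    refine ⟨hF.2.2.2.2 X Y Z hX.1 hZ.1 f g hf hg hfg, ?_⟩
    rintro _ rfl u
    obtain ⟨v, rfl⟩ := factor_of_exact f g hg hfg u (hX.2 _ rfl _)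
    rw [hZ.2 _ rfl v, LinearMap.zero_comp]

theorem zeroOrSurj_isTorsionClass (B : ModuleCat.{0} A) :
    IsTorsionClass A {M : ModuleCat.{0} A | Module.Finite A M ∧
      ∀ u : M →ₗ[A] B, u = 0 ∨ Function.Surjective u} := by
  have hF := finiteClass_isTorsionClass (A := A)
  have hq : ∀ M : ModuleCat.{0} A, (Module.Finite A M ∧
      ∀ u : M →ₗ[A] B, u = 0 ∨ Function.Surjective u) → ∀ N : ModuleCat.{0} A,
      ∀ f : M →ₗ[A] N, Function.Surjective f → (Module.Finite A N ∧
      ∀ u : N →ₗ[A] B, u = 0 ∨ Function.Surjective u) := by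
    intro M hM N f hf
    refine ⟨hF.2.2.2.1 M hM.1 N f hf, ?_⟩
    intro u
    rcases hM.2 (u ∘ₗ f) with h | h
    · left
      ext n
      obtain ⟨m, rfl⟩ := hf n
      exact LinearMap.congr_fun h m
    · right
      exact Function.Surjective.of_comp (g := f) h
  refine ⟨fun M h => h.1, ?_, ?_, hq, ?_⟩
  · rintro M hM N ⟨e⟩
    exact hq M hM N e.toLinearMap e.surjective
  · refine ⟨ModuleCat.of A PUnit, ⟨(inferInstance : Module.Finite A PUnit), ?_⟩,
      (inferInstance : Subsingleton PUnit)⟩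
    intro u
    left
    ext x
    exact u.map_zero
  · intro X Y Z hX hZ f g hf hg hfg
    refine ⟨hF.2.2.2.2 X Y Z hX.1 hZ.1 f g hf hg hfg, ?_⟩
    intro u
    rcases hX.2 (u ∘ₗ f) with h | h
    · obtain ⟨v, rfl⟩ := factor_of_exact f g hg hfg u h
      rcases hZ.2 v with h' | h'
      · left
        rw [h', LinearMap.zero_comp]
      · right
        exact h'.comp hg
    · right
      exact Function.Surjective.of_comp (g := f) h

theorem zero_or_surj {B : ModuleCat.{0} A} (hB : IsBrick A B) {X : ModuleCat.{0} A}
    (hX : X ∈ Tgen A B) (u : X →ₗ[A] B) : u = 0 ∨ Function.Surjective u := by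
  refine (Tgen_le (zeroOrSurj_isTorsionClass B) ⟨hB.1, fun v => ?_⟩ hX).2 u
  by_cases h : v = 0
  · exact Or.inl h
  · exact Or.inr (hB.2.2 v h).2

theorem not_mem_leftPerp {B : ModuleCat.{0} A} (hB : IsBrick A B) : B ∉ leftPerp A {B} := by
  intro h
  have h1 := h.2 B rfl LinearMap.id
  obtain ⟨x, hx⟩ := @exists_ne _ hB.2.1 (0 : B)
  exact hx (LinearMap.congr_fun h1 x)

theorem inter_isTorsionClass {S T : Set (ModuleCat.{0} A)} (hS : IsTorsionClass A S)
    (hT : IsTorsionClass A T) : IsTorsionClass A (S ∩ T) := by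
  refine ⟨fun M h => hS.1 M h.1, fun M h N e => ⟨hS.2.1 M h.1 N e, hT.2.1 M h.2 N e⟩, ?_,
    fun M h N f hf => ⟨hS.2.2.2.1 M h.1 N f hf, hT.2.2.2.1 M h.2 N f hf⟩,
    fun X Y Z hX hZ f g hf hg hfg => ⟨hS.2.2.2.2 X Y Z hX.1 hZ.1 f g hf hg hfg,
      hT.2.2.2.2 X Y Z hX.2 hZ.2 f g hf hg hfg⟩⟩
  obtain ⟨Z, hZ, hs⟩ := hS.2.2.1
  obtain ⟨W, hW, _⟩ := hT.2.2.1
  exact ⟨Z, ⟨hZ, hT.2.2.2.1 W hW Z 0 (fun z => ⟨0, Subsingleton.elim _ _⟩)⟩, hs⟩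

theorem brick_cji {B : ModuleCat.{0} A} (hB : IsBrick A B) : IsCJITors A (Tgen A B) := by
  have hT := Tgen_isTorsionClass B hB.1
  refine ⟨hT, Tgen A B ∩ leftPerp A {B}, inter_isTorsionClass hT (leftPerp_isTorsionClass B), ?_⟩
  intro 𝒴 h𝒴
  constructor
  · intro hlt X hX
    refine ⟨hlt.1 hX, h𝒴.1 X hX, ?_⟩
    rintro _ rfl u
    rcases zero_or_surj hB (hlt.1 hX) u with h | h
    · exact h
    · exact absurd (Tgen_le h𝒴 (h𝒴.2.2.2.1 X hX _ u h)) hlt.2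
  · intro hle
    exact ⟨fun X hX => (hle hX).1, fun h => not_mem_leftPerp hB (hle (h (mem_Tgen B))).2⟩

theorem exists_surj {B B' : ModuleCat.{0} A} (hB : IsBrick A B) (hB' : IsBrick A B')
    (h : Tgen A B = Tgen A B') : ∃ f : B →ₗ[A] B', Function.Surjective f := by
  by_contra hc
  push Not at hc
  have hm : B ∈ leftPerp A {B'} := by
    refine ⟨hB.1, ?_⟩
    rintro _ rfl u
    exact (zero_or_surj hB' (h ▸ mem_Tgen B) u).resolve_right (hc u)
  exact not_mem_leftPerp hB'
    (Tgen_le (leftPerp_isTorsionClass B') hm (h ▸ mem_Tgen B'))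

theorem brick_inj {B B' : ModuleCat.{0} A} (hB : IsBrick A B) (hB' : IsBrick A B')
    (h : Tgen A B = Tgen A B') : Nonempty (B ≃ₗ[A] B') := by
  obtain ⟨f, hf⟩ := exists_surj hB hB' h
  obtain ⟨g, hg⟩ := exists_surj hB' hB h.symm
  have hs : Function.Surjective (g ∘ₗ f) := hg.comp hf
  have hne : g ∘ₗ f ≠ 0 := by
    intro h0
    obtain ⟨x, hx⟩ := @exists_ne _ hB.2.1 (0 : B)
    obtain ⟨y, hy⟩ := hs x
    rw [h0] at hy
    exact hx hy.symm
  have hi : Function.Injective f :=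
    Function.Injective.of_comp (f := g) (hB.2.2 _ hne).1
  exact ⟨LinearEquiv.ofBijective f ⟨hi, hf⟩⟩

theorem length_quot_lt [IsArtinianRing A] (M : Type) [AddCommGroup M] [Module A M]
    [Module.Finite A M] (N : Submodule A M) (hN : N ≠ ⊥) :
    Module.length A (M ⧸ N) < Module.length A M := by
  have h := Module.length_eq_add_of_exact N.subtype N.mkQ N.injective_subtype N.mkQ_surjective
    (LinearMap.exact_subtype_mkQ N)
  have hpos : 0 < Module.length A N := by
    rw [Module.length_pos_iff]
    exact (Submodule.nontrivial_iff_ne_bot).mpr hN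
  have hfin : Module.length A (M ⧸ N) ≠ ⊤ := Module.length_ne_top
  rw [h, add_comm]
  exact (ENat.add_lt_add_iff_left hfin).mpr hpos |>.trans_le' (by simp)

theorem cji_brick [IsArtinianRing A] {𝒥 : Set (ModuleCat.{0} A)} (h : IsCJITors A 𝒥) :
    ∃ B, IsBrick A B ∧ 𝒥 = Tgen A B := by
  obtain ⟨hJ, 𝒮, hS, hiff⟩ := h
  have hne : (𝒥 \ 𝒮).Nonempty := by
    rw [Set.sdiff_nonempty]
    intro hle
    exact (ssubset_irrefl 𝒥) ((hiff 𝒥 hJ).mpr hle)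
  obtain ⟨M, hM, hmin⟩ := (InvImage.wf (fun M : ModuleCat.{0} A => Module.length A M)
    (wellFounded_lt (α := ℕ∞))).has_min _ hne
  have hfin : Module.Finite A M := hJ.1 M hM.1
  have hquot : ∀ N : Submodule A M, N ≠ ⊥ → ModuleCat.of A (M ⧸ N) ∈ 𝒮 := by
    intro N hN
    by_contra hc
    exact hmin (ModuleCat.of A (M ⧸ N))
      ⟨hJ.2.2.2.1 M hM.1 (ModuleCat.of A (M ⧸ N)) N.mkQ N.mkQ_surjective, hc⟩
      (length_quot_lt M N hN)
  refine ⟨M, ⟨hfin, ?_, ?_⟩, ?_⟩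
  · by_contra hc
    rw [not_nontrivial_iff_subsingleton] at hc
    obtain ⟨Z, hZ, _⟩ := hS.2.2.1
    exact hM.2 (hS.2.2.2.1 Z hZ M 0 (fun z => ⟨0, Subsingleton.elim _ _⟩))
  · intro f hf
    by_contra hb
    have hker : LinearMap.ker f ≠ ⊥ := by
      intro hk
      exact hb (IsArtinian.bijective_of_injective_endomorphism f (LinearMap.ker_eq_bot.mp hk))
    have hran : LinearMap.range f ≠ ⊥ := by
      rwa [Ne, LinearMap.range_eq_bot]
    refine hM.2 (hS.2.2.2.2 (ModuleCat.of A (M ⧸ LinearMap.ker f)) M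
      (ModuleCat.of A (M ⧸ LinearMap.range f)) (hquot _ hker) (hquot _ hran)
      ((LinearMap.ker f).liftQ f le_rfl) (LinearMap.range f).mkQ ?_
      (Submodule.mkQ_surjective _) ?_)
    · rw [← LinearMap.ker_eq_bot]
      exact Submodule.ker_liftQ_eq_bot _ _ _ le_rfl
    · exact (Submodule.range_liftQ _ _ _).trans (Submodule.ker_mkQ _).symm
  · have hT := Tgen_isTorsionClass M hfin
    have hle : Tgen A M ⊆ 𝒥 := Tgen_le hJ hM.1
    by_contra hneq
    exact hM.2 ((hiff _ hT).mp (hle.ssubset_of_ne (Ne.symm hneq)) (mem_Tgen M))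

end helpers

theorem bricks_biject_with_cji_torsionClasses
    (k A : Type) [Field k] [Ring A] [Algebra k A] [FiniteDimensional k A] :
    (∀ B, IsBrick A B → IsCJITors A (Tgen A B)) ∧
    (∀ 𝒥, IsCJITors A 𝒥 → ∃ B, IsBrick A B ∧ 𝒥 = Tgen A B) ∧
    (∀ B B', IsBrick A B → IsBrick A B' → Tgen A B = Tgen A B' →
      Nonempty (B ≃ₗ[A] B')) := by
  have : IsArtinianRing A := IsArtinianRing.of_finite k A
  exact ⟨fun B hB => brick_cji hB, fun 𝒥 h => cji_brick h, fun B B' hB hB' h => brick_inj hB hB' h⟩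
end

section
/- The map B ↦ ⊥F(B), where F(B) is the smallest torsion free class containing B, induces a bijection from the set of isomorphism classes of bricks of mod A to the set of completely meet irreducible elements of the complete lattice tors A. -/
open CategoryTheory

/-- A completely meet irreducible element of the lattice of torsion classes:
a torsion class `ℳ` possessing a torsion class `ℳ⁺` such that, for every torsion class
`𝒴`, `ℳ ⊊ 𝒴` if and only if `ℳ⁺ ⊆ 𝒴`. -/
def IsCMITors (A : Type) [Ring A] (ℳ : Set (ModuleCat.{0} A)) : Prop :=
  IsTorsionClass A ℳ ∧ ∃ ℳs, IsTorsionClass A ℳs ∧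
    ∀ 𝒴, IsTorsionClass A 𝒴 → (ℳ ⊂ 𝒴 ↔ ℳs ⊆ 𝒴)

/-- A linear map killing a submodule `U` factors through `M ⧸ U`; vanishing of all maps out of
the quotient forces vanishing of the map. -/
theorem brickAux_eq_zero_of_quot {A : Type} [Ring A] {M N : ModuleCat.{0} A}
    (U : Submodule A M) (f : M →ₗ[A] N) (hU : U ≤ LinearMap.ker f)
    (h : ∀ g : (M ⧸ U) →ₗ[A] N, g = 0) : f = 0 := by
  have h0 := h (U.liftQ f hU)
  ext x
  have := LinearMap.congr_fun h0 (U.mkQ x)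
  simpa using this

/-- The left perpendicular class of any class is a torsion class. -/
theorem brickAux_leftPerp_torsion {A : Type} [Ring A] (𝒞 : Set (ModuleCat.{0} A)) :
    IsTorsionClass A (leftPerp A 𝒞) := by
  have hquot : ∀ M ∈ leftPerp A 𝒞, ∀ N : ModuleCat.{0} A, ∀ f : M →ₗ[A] N,
      Function.Surjective f → N ∈ leftPerp A 𝒞 := by
    rintro M ⟨hM, hM'⟩ N f hf
    refine ⟨Module.Finite.of_surjective f hf, fun Y hY g => ?_⟩
    have h0 := hM' Y hY (g.comp f)
    ext x
    obtain ⟨y, rfl⟩ := hf x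
    exact LinearMap.congr_fun h0 y
  refine ⟨fun M hM => hM.1, ?_, ?_, hquot, ?_⟩
  · rintro M hM N ⟨e⟩
    exact hquot M hM N e.toLinearMap e.surjective
  · refine ⟨ModuleCat.of A PUnit, ⟨inferInstanceAs (Module.Finite A PUnit), fun Y _ f => ?_⟩,
      inferInstanceAs (Subsingleton PUnit)⟩
    ext x
    have hx : x = 0 := Subsingleton.elim (α := PUnit) _ _
    simp [hx]
  · rintro X Y Z ⟨hX, hX'⟩ ⟨hZ, hZ'⟩ f g hf hg hfg
    refine ⟨?_, fun W hW h => ?_⟩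
    · have h1 : (LinearMap.range f).FG := by
        rw [LinearMap.range_eq_map]; exact (Module.Finite.fg_top).map f
      refine ⟨Submodule.fg_of_fg_map_of_fg_inf_ker g ?_ ?_⟩
      · rw [Submodule.map_top, LinearMap.range_eq_top.mpr hg]; exact Module.Finite.fg_top
      · rw [top_inf_eq, ← hfg]; exact h1
    · have h0 := hX' W hW (h.comp f)
      have hk : LinearMap.ker g ≤ LinearMap.ker h := by
        rw [← hfg]
        rintro _ ⟨x, rfl⟩
        exact LinearMap.congr_fun h0 x
      refine brickAux_eq_zero_of_quot (LinearMap.ker g) h hk fun q => ?_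
      have h2 := hZ' W hW (q.comp (g.quotKerEquivOfSurjective hg).symm.toLinearMap)
      apply LinearMap.ext
      intro x
      have := LinearMap.congr_fun h2 (g.quotKerEquivOfSurjective hg x)
      simpa using this

/-- The right perpendicular class of any class is a torsion-free class. -/
theorem brickAux_rightPerp_torsionFree {A : Type} [Ring A] [IsNoetherianRing A]
    (𝒞 : Set (ModuleCat.{0} A)) : IsTorsionFreeClass A (rightPerp A 𝒞) := by
  have hsub : ∀ M ∈ rightPerp A 𝒞, ∀ N : ModuleCat.{0} A, ∀ f : N →ₗ[A] M,
      Function.Injective f → N ∈ rightPerp A 𝒞 := by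
    rintro M ⟨hM, hM'⟩ N f hf
    refine ⟨Module.Finite.of_injective f hf, fun X hX g => ?_⟩
    have h0 := hM' X hX (f.comp g)
    ext x
    apply hf
    simpa using LinearMap.congr_fun h0 x
  refine ⟨fun M hM => hM.1, ?_, ?_, hsub, ?_⟩
  · rintro M hM N ⟨e⟩
    exact hsub M hM N e.symm.toLinearMap e.symm.injective
  · refine ⟨ModuleCat.of A PUnit, ⟨inferInstanceAs (Module.Finite A PUnit), fun Y _ f => ?_⟩,
      inferInstanceAs (Subsingleton PUnit)⟩
    ext x
  · rintro X Y Z ⟨hX, hX'⟩ ⟨hZ, hZ'⟩ f g hf hg hfg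
    refine ⟨?_, fun W hW h => ?_⟩
    · have h1 : (LinearMap.range f).FG := by
        rw [LinearMap.range_eq_map]; exact (Module.Finite.fg_top).map f
      refine ⟨Submodule.fg_of_fg_map_of_fg_inf_ker g ?_ ?_⟩
      · rw [Submodule.map_top, LinearMap.range_eq_top.mpr hg]; exact Module.Finite.fg_top
      · rw [top_inf_eq, ← hfg]; exact h1
    · have h0 := hZ' W hW (g.comp h)
      have hr : ∀ x, h x ∈ LinearMap.range f := by
        intro x
        rw [hfg]
        exact LinearMap.congr_fun h0 x
      have h2 := hX' W hW ((LinearEquiv.ofInjective f hf).symm.toLinearMap.comp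
        (h.codRestrict (LinearMap.range f) hr))
      ext x
      have h3 := LinearMap.congr_fun h2 x
      have h4 : h.codRestrict (LinearMap.range f) hr x = 0 := by simpa using h3
      simpa using congrArg Subtype.val h4

/-- `⊥F(B) = ⊥B`. -/
theorem brickAux_mem_leftPerp_Fgen {A : Type} [Ring A] [IsNoetherianRing A]
    (B : ModuleCat.{0} A) (hB : Module.Finite A B) (X : ModuleCat.{0} A) :
    X ∈ leftPerp A (Fgen A B) ↔ Module.Finite A X ∧ ∀ f : X →ₗ[A] B, f = 0 := by
  constructor
  · rintro ⟨h1, h2⟩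
    exact ⟨h1, h2 B fun ℱ _ h => h⟩
  · rintro ⟨h1, h2⟩
    refine ⟨h1, fun Y hY => ?_⟩
    exact (hY (rightPerp A {X}) (brickAux_rightPerp_torsionFree _)
      ⟨hB, by rintro _ rfl; exact h2⟩).2 X rfl

/-- The torsion class generated by a set of modules contained in some torsion class. -/
theorem brickAux_TgenSet_torsion {A : Type} [Ring A] (𝒞 : Set (ModuleCat.{0} A))
    (h𝒞 : ∀ M ∈ 𝒞, Module.Finite A M) : IsTorsionClass A (TgenSet A 𝒞) := by
  have hall : IsTorsionClass A {M : ModuleCat.{0} A | Module.Finite A M} := by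
    have := brickAux_leftPerp_torsion (A := A) ∅
    simpa [leftPerp] using this
  refine ⟨fun M hM => hM _ hall h𝒞, ?_, ?_, ?_, ?_⟩
  · exact fun M hM N e 𝒯 h𝒯 hs => h𝒯.2.1 M (hM 𝒯 h𝒯 hs) N e
  · refine ⟨ModuleCat.of A PUnit, fun 𝒯 h𝒯 hs => ?_, inferInstanceAs (Subsingleton PUnit)⟩
    obtain ⟨Z, hZ, _⟩ := h𝒯.2.2.1
    exact h𝒯.2.2.2.1 Z hZ (ModuleCat.of A PUnit) 0
      (fun x => ⟨0, Subsingleton.elim (α := PUnit) _ _⟩)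
  · exact fun M hM N f hf 𝒯 h𝒯 hs => h𝒯.2.2.2.1 M (hM 𝒯 h𝒯 hs) N f hf
  · exact fun X Y Z hX hZ f g hf hg hfg 𝒯 h𝒯 hs =>
      h𝒯.2.2.2.2 X Y Z (hX 𝒯 h𝒯 hs) (hZ 𝒯 h𝒯 hs) f g hf hg hfg

/-- A proper quotient of a brick has no nonzero map to the brick. -/
theorem brickAux_quot {A : Type} [Ring A] {B : ModuleCat.{0} A} (hB : IsBrick A B)
    (U : Submodule A B) (hU : U ≠ ⊥) (g : (B ⧸ U) →ₗ[A] B) : g = 0 := by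
  by_contra hg
  have h1 : g.comp U.mkQ ≠ 0 := by
    intro h
    apply hg
    apply LinearMap.ext
    intro x
    obtain ⟨y, rfl⟩ := U.mkQ_surjective x
    exact LinearMap.congr_fun h y
  apply hU
  rw [eq_bot_iff]
  intro x hx
  have h2 := (hB.2.2 _ h1).1
  have : g.comp U.mkQ x = g.comp U.mkQ 0 := by
    simp [(Submodule.Quotient.mk_eq_zero U).mpr hx]
  exact h2 this

theorem brickAux_id_ne {A : Type} [Ring A] {B : ModuleCat.{0} A} [Nontrivial B]
    (h : ∀ f : B →ₗ[A] B, f = 0) : False := by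
  obtain ⟨x, hx⟩ := exists_ne (0 : B)
  exact hx (by simpa using LinearMap.congr_fun (h LinearMap.id) x)

/-- If `⊥B' ⊆ ⊥B`, then a composite `B ⟶ B' ⟶ B` of nonzero maps is nonzero. -/
theorem brickAux_comp_ne {A : Type} [Ring A] {B B' : ModuleCat.{0} A}
    (hB' : IsBrick A B')
    (h : ∀ X : ModuleCat.{0} A, Module.Finite A X → (∀ f : X →ₗ[A] B', f = 0) →
      ∀ f : X →ₗ[A] B, f = 0)
    (f : B →ₗ[A] B') (g : B' →ₗ[A] B) (hf : f ≠ 0) (hg : g ≠ 0) : g.comp f ≠ 0 := by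
  intro h0
  have := hB'.1
  apply hg
  have hr : LinearMap.range f ≠ ⊥ := fun hh => hf (LinearMap.range_eq_bot.mp hh)
  refine brickAux_eq_zero_of_quot (LinearMap.range f) g ?_ ?_
  · rintro _ ⟨x, rfl⟩
    exact LinearMap.congr_fun h0 x
  · exact h (ModuleCat.of A (B' ⧸ LinearMap.range f))
      (inferInstanceAs (Module.Finite A (B' ⧸ LinearMap.range f)))
      (brickAux_quot hB' _ hr)

/-- Extension closure for a submodule and its quotient. -/
theorem brickAux_ext {A : Type} [Ring A] {𝒯 : Set (ModuleCat.{0} A)} (h𝒯 : IsTorsionClass A 𝒯)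
    (M : ModuleCat.{0} A) (U : Submodule A M) (h1 : ModuleCat.of A U ∈ 𝒯)
    (h2 : ModuleCat.of A (M ⧸ U) ∈ 𝒯) : M ∈ 𝒯 :=
  h𝒯.2.2.2.2 (ModuleCat.of A U) M (ModuleCat.of A (M ⧸ U)) h1 h2 U.subtype U.mkQ
    U.subtype_injective U.mkQ_surjective (by simp)

/-- The image of a map out of a module in a torsion class is in the torsion class. -/
theorem brickAux_range {A : Type} [Ring A] {𝒯 : Set (ModuleCat.{0} A)} (h𝒯 : IsTorsionClass A 𝒯)
    {X M : ModuleCat.{0} A} (hX : X ∈ 𝒯) (f : X →ₗ[A] M) :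
    ModuleCat.of A (LinearMap.range f) ∈ 𝒯 :=
  h𝒯.2.2.2.1 X hX (ModuleCat.of A (LinearMap.range f)) f.rangeRestrict f.surjective_rangeRestrict

theorem brickAux_cmi {A : Type} [Ring A] [IsNoetherianRing A] (B : ModuleCat.{0} A)
    (hB : IsBrick A B) : IsCMITors A (leftPerp A (Fgen A B)) := by
  have hfin := hB.1
  have hnt := hB.2.1
  have hmem := brickAux_mem_leftPerp_Fgen B hfin
  refine ⟨brickAux_leftPerp_torsion _, TgenSet A (leftPerp A (Fgen A B) ∪ {B}),
    brickAux_TgenSet_torsion _ ?_, fun 𝒴 h𝒴 => ⟨fun hlt => ?_, fun hle => ?_⟩⟩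
  · rintro M (hM | hM)
    · exact hM.1
    · rw [Set.mem_singleton_iff.mp hM]; exact hfin
  · obtain ⟨hsub, hns⟩ := hlt
    obtain ⟨X, hX, hXn⟩ := Set.not_subset.mp hns
    have hXfin := h𝒴.1 X hX
    have : ∃ f : X →ₗ[A] B, f ≠ 0 := by
      by_contra hcon
      push Not at hcon
      exact hXn ((hmem X).mpr ⟨hXfin, hcon⟩)
    obtain ⟨f, hf⟩ := this
    have hr : LinearMap.range f ≠ ⊥ := fun hh => hf (LinearMap.range_eq_bot.mp hh)
    have hBY : B ∈ 𝒴 := by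
      refine brickAux_ext h𝒴 B (LinearMap.range f) (brickAux_range h𝒴 hX f) (hsub ?_)
      exact (hmem _).mpr ⟨inferInstanceAs (Module.Finite A (B ⧸ LinearMap.range f)),
        brickAux_quot hB _ hr⟩
    intro Z hZ
    refine hZ 𝒴 h𝒴 ?_
    rintro M (hM | hM)
    · exact hsub hM
    · rw [Set.mem_singleton_iff.mp hM]; exact hBY
  · refine ⟨fun M hM => hle fun 𝒯 _ hs => hs (Or.inl hM), fun hcon => ?_⟩
    have hBY : B ∈ 𝒴 := hle fun 𝒯 _ hs => hs (Or.inr rfl)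
    exact brickAux_id_ne ((hmem B).mp (hcon hBY)).2

theorem brickAux_surj {A : Type} [Ring A] [IsNoetherianRing A] [IsArtinianRing A]
    (ℳ : Set (ModuleCat.{0} A)) (hℳ : IsCMITors A ℳ) :
    ∃ B, IsBrick A B ∧ ℳ = leftPerp A (Fgen A B) := by
  obtain ⟨ht, ℳs, hs, hcov⟩ := hℳ
  have hlt : ℳ ⊂ ℳs := (hcov ℳs hs).mpr subset_rfl
  have hne : (ℳs \ ℳ).Nonempty := by
    obtain ⟨X, hX, hXn⟩ := Set.not_subset.mp hlt.2
    exact ⟨X, hX, hXn⟩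
  obtain ⟨B, ⟨hBs, hBn⟩, hmin⟩ := (InvImage.wf (fun M : ModuleCat.{0} A => Module.length A M)
    (wellFounded_lt (α := ℕ∞))).has_min _ hne
  have hfin : Module.Finite A B := hs.1 B hBs
  have hart : IsArtinian A B := inferInstance
  have hq : ∀ U : Submodule A B, U ≠ ⊥ → ModuleCat.of A (B ⧸ U) ∈ ℳ := by
    intro U hU
    by_contra hcon
    refine hmin (ModuleCat.of A (B ⧸ U)) ⟨?_, hcon⟩ ?_
    · exact hs.2.2.2.1 B hBs (ModuleCat.of A (B ⧸ U)) U.mkQ U.mkQ_surjective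
    · exact Submodule.length_quotient_lt U hU
  have hperp : ∀ X ∈ ℳ, ∀ f : X →ₗ[A] B, f = 0 := by
    intro X hX f
    by_contra hf
    exact hBn (brickAux_ext ht B (LinearMap.range f) (brickAux_range ht hX f)
      (hq _ fun hh => hf (LinearMap.range_eq_bot.mp hh)))
  have hnt : Nontrivial B := by
    by_contra hcon
    rw [not_nontrivial_iff_subsingleton] at hcon
    obtain ⟨Z, hZ, _⟩ := ht.2.2.1
    exact hBn (ht.2.2.2.1 Z hZ B 0 fun x => ⟨0, Subsingleton.elim _ _⟩)
  have hbrick : IsBrick A B := by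
    refine ⟨hfin, hnt, fun f hf => IsArtinian.bijective_of_injective_endomorphism f ?_⟩
    rw [← LinearMap.ker_eq_bot]
    by_contra hk
    exact hf (brickAux_eq_zero_of_quot (LinearMap.ker f) f le_rfl (hperp _ (hq _ hk)))
  refine ⟨B, hbrick, ?_⟩
  have hmem := brickAux_mem_leftPerp_Fgen B hfin
  have hsub : ℳ ⊆ leftPerp A (Fgen A B) := fun X hX =>
    (hmem X).mpr ⟨ht.1 X hX, hperp X hX⟩
  by_contra hcon
  have hss : ℳ ⊂ leftPerp A (Fgen A B) := lt_of_le_of_ne hsub hcon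
  have := (hcov _ (brickAux_leftPerp_torsion _)).mp hss hBs
  exact brickAux_id_ne ((hmem B).mp this).2

theorem brickAux_inj {A : Type} [Ring A] [IsNoetherianRing A] (B B' : ModuleCat.{0} A)
    (hB : IsBrick A B) (hB' : IsBrick A B')
    (h : leftPerp A (Fgen A B) = leftPerp A (Fgen A B')) : Nonempty (B ≃ₗ[A] B') := by
  have hmem := brickAux_mem_leftPerp_Fgen B hB.1
  have hmem' := brickAux_mem_leftPerp_Fgen B' hB'.1
  have h1 : ∀ X : ModuleCat.{0} A, Module.Finite A X → (∀ f : X →ₗ[A] B', f = 0) →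
      ∀ f : X →ₗ[A] B, f = 0 := fun X hX hf =>
    ((hmem X).mp (h ▸ (hmem' X).mpr ⟨hX, hf⟩)).2
  have h2 : ∀ X : ModuleCat.{0} A, Module.Finite A X → (∀ f : X →ₗ[A] B, f = 0) →
      ∀ f : X →ₗ[A] B', f = 0 := fun X hX hf =>
    ((hmem' X).mp (h ▸ (hmem X).mpr ⟨hX, hf⟩)).2
  have := hB.2.1
  have := hB'.2.1
  obtain ⟨f, hf⟩ : ∃ f : B →ₗ[A] B', f ≠ 0 := by
    by_contra hcon
    push Not at hcon
    exact brickAux_id_ne (h1 B hB.1 hcon)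
  obtain ⟨g, hg⟩ : ∃ g : B' →ₗ[A] B, g ≠ 0 := by
    by_contra hcon
    push Not at hcon
    exact brickAux_id_ne (h2 B' hB'.1 hcon)
  have b1 := hB.2.2 _ (brickAux_comp_ne hB' h1 f g hf hg)
  have b2 := hB'.2.2 _ (brickAux_comp_ne hB h2 g f hg hf)
  rw [LinearMap.coe_comp] at b1 b2
  exact ⟨LinearEquiv.ofBijective f ⟨b1.1.of_comp, b2.2.of_comp⟩⟩

theorem bricks_biject_with_cmi_torsionClasses
    (k A : Type) [Field k] [Ring A] [Algebra k A] [FiniteDimensional k A] :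
    (∀ B, IsBrick A B → IsCMITors A (leftPerp A (Fgen A B))) ∧
    (∀ ℳ, IsCMITors A ℳ → ∃ B, IsBrick A B ∧ ℳ = leftPerp A (Fgen A B)) ∧
    (∀ B B', IsBrick A B → IsBrick A B' →
      leftPerp A (Fgen A B) = leftPerp A (Fgen A B') → Nonempty (B ≃ₗ[A] B')) := by
  have := IsNoetherianRing.of_finite k A
  have := IsArtinianRing.of_finite k A
  exact ⟨brickAux_cmi, brickAux_surj, brickAux_inj⟩
end

section
/- Let L be a completely join semidistributive complete lattice and let x ⋖ y be a covering pair in L (x < y and no z with x < z < y). Then there exists a unique completely join irreducible element j ∈ L such that x ⊔ j = y and x ⊔ j_* = x (where j_* = ⋁{z | z < j}); moreover j is the minimum of the set {z ∈ L | x ⊔ z = y}. -/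
/-- A complete lattice is completely join semidistributive if whenever `x ⊔ y = z` for all
`y` in a nonempty set `S`, also `x ⊔ ⋀S = z`. -/
def CompletelyJoinSemidistributive (L : Type*) [CompleteLattice L] : Prop :=
  ∀ (x z : L) (S : Set L), S.Nonempty → (∀ y ∈ S, x ⊔ y = z) → x ⊔ sInf S = z

/-- A complete lattice is completely meet semidistributive if whenever `x ⊓ y = z` for all
`y` in a nonempty set `S`, also `x ⊓ ⋁S = z`. -/
def CompletelyMeetSemidistributive (L : Type*) [CompleteLattice L] : Prop :=
  ∀ (x z : L) (S : Set L), S.Nonempty → (∀ y ∈ S, x ⊓ y = z) → x ⊓ sSup S = z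

/-- `j` is completely join irreducible: `⋁{y | y < j} < j`. -/
def CompletelyJoinIrreducible {L : Type*} [CompleteLattice L] (j : L) : Prop :=
  sSup {y | y < j} < j

/-- `j_* = ⋁{y | y < j}`. -/
def jStar {L : Type*} [CompleteLattice L] (j : L) : L :=
  sSup {y | y < j}

/-- `m` is completely meet irreducible: `m < ⋀{y | m < y}`. -/
def CompletelyMeetIrreducible {L : Type*} [CompleteLattice L] (m : L) : Prop :=
  m < sInf {y | m < y}

/-- `m^* = ⋀{y | m < y}`. -/
def mStar {L : Type*} [CompleteLattice L] (m : L) : L :=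
  sInf {y | m < y}
theorem cover_has_unique_cji_label {L : Type*} [CompleteLattice L]
    (hL : CompletelyJoinSemidistributive L) (x y : L) (hxy : x ⋖ y) :
    ∃ j : L, (CompletelyJoinIrreducible j ∧ x ⊔ j = y ∧ x ⊔ jStar j = x) ∧
      (∀ z, x ⊔ z = y → j ≤ z) ∧
      (∀ j', CompletelyJoinIrreducible j' → x ⊔ j' = y → x ⊔ jStar j' = x → j' = j) := by
  have hj : x ⊔ sInf {z | x ⊔ z = y} = y :=
    hL x y {z | x ⊔ z = y} ⟨y, sup_eq_right.2 hxy.le⟩ (fun _ h => h)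
  have hmin : ∀ z, x ⊔ z = y → sInf {z | x ⊔ z = y} ≤ z := fun z hz => sInf_le hz
  generalize sInf {z | x ⊔ z = y} = j at hj hmin
  have hnot : ¬ j ≤ x := fun h => hxy.lt.ne (by rw [← hj, sup_eq_left.2 h])
  have hstar : sSup {z | z < j} ≤ x := by
    refine sSup_le fun z hz => ?_
    have hz : z < j := hz
    have hzy : x ⊔ z ≤ y := hj ▸ sup_le_sup_left hz.le x
    rcases hxy.eq_or_eq le_sup_left hzy with h | h
    · exact sup_eq_left.1 h
    · exact absurd (hmin z h) (not_le_of_gt hz)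
  refine ⟨j, ⟨?_, hj, sup_eq_left.2 hstar⟩, hmin, ?_⟩
  · refine lt_of_le_of_ne (sSup_le fun z hz => le_of_lt hz) fun h => hnot ?_
    exact h ▸ hstar
  · intro j' _ h1 h2
    by_contra hne
    have hlt : j < j' := lt_of_le_of_ne (hmin j' h1) (Ne.symm hne)
    have hle : j ≤ jStar j' := le_sSup hlt
    exact hnot (hle.trans (sup_eq_left.1 h2))
end

section
/- Let L be a completely semidistributive complete lattice. Then the maps κ and κ^d are mutually inverse bijections between the set of completely join irreducible elements of L and the set of completely meet irreducible elements of L, where for a completely join irreducible j, κ(j) is the unique completely meet irreducible m with m ⊓ j = j_* and m^* ⊓ j = j (equivalently m = μ(j ⋗ j_*)), and for a completely meet irreducible m, κ^d(m) is the unique completely join irreducible element γ(m^* ⋗ m) associated to the cover m^* ⋗ m. -/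
theorem kappa_bijection {L : Type*} [CompleteLattice L]
    (hj : CompletelyJoinSemidistributive L) (hm : CompletelyMeetSemidistributive L) :
    (∀ j : L, CompletelyJoinIrreducible j →
      ∃! m : L, CompletelyMeetIrreducible m ∧ m ⊓ j = jStar j ∧ mStar m ⊓ j = j) ∧
    (∀ m : L, CompletelyMeetIrreducible m →
      ∃! j : L, CompletelyJoinIrreducible j ∧ m ⊔ j = mStar m ∧ m ⊔ jStar j = m) ∧
    (∀ j m : L, CompletelyJoinIrreducible j → CompletelyMeetIrreducible m →
      ((m ⊓ j = jStar j ∧ mStar m ⊓ j = j) ↔ (m ⊔ j = mStar m ∧ m ⊔ jStar j = m))) := by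
  have e1 : ∀ j m : L, CompletelyJoinIrreducible j →
      ((m ⊓ j = jStar j ∧ mStar m ⊓ j = j) ↔ (jStar j ≤ m ∧ ¬ j ≤ m ∧ j ≤ mStar m)) := by
    intro j m hJ
    have hJ' : jStar j < j := hJ
    constructor
    · rintro ⟨h1, h2⟩
      refine ⟨h1 ▸ inf_le_left, fun h => ?_, inf_eq_right.1 h2⟩
      rw [inf_eq_right.2 h] at h1
      exact hJ'.ne h1.symm
    · rintro ⟨h1, h2, h3⟩
      refine ⟨le_antisymm ?_ (le_inf h1 hJ'.le), inf_eq_right.2 h3⟩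
      exact le_sSup (lt_of_le_of_ne inf_le_right (fun h => h2 (inf_eq_right.1 h)))
  have e2 : ∀ j m : L, CompletelyMeetIrreducible m →
      ((m ⊔ j = mStar m ∧ m ⊔ jStar j = m) ↔ (jStar j ≤ m ∧ ¬ j ≤ m ∧ j ≤ mStar m)) := by
    intro j m hM
    have hM' : m < mStar m := hM
    constructor
    · rintro ⟨h1, h2⟩
      refine ⟨sup_eq_left.1 h2, fun h => ?_, h1 ▸ le_sup_right⟩
      rw [sup_eq_left.2 h] at h1
      exact hM'.ne h1
    · rintro ⟨h1, h2, h3⟩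
      refine ⟨le_antisymm (sup_le hM'.le h3) ?_, sup_eq_left.2 h1⟩
      exact sInf_le (lt_of_le_of_ne le_sup_left (fun h => h2 (sup_eq_left.1 h.symm)))
  refine ⟨?_, ?_, fun j m hJ hM => (e1 j m hJ).trans (e2 j m hM).symm⟩
  · intro j hJ
    have hJ' : jStar j < j := hJ
    have key := hm j (jStar j) {y | j ⊓ y = jStar j} ⟨jStar j, inf_eq_right.2 hJ'.le⟩
      (fun y hy => hy)
    have hub : ∀ y, j ⊓ y = jStar j → y ≤ sSup {y | j ⊓ y = jStar j} := fun y hy => le_sSup hy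
    generalize sSup {y | j ⊓ y = jStar j} = m at key hub
    have h1 : jStar j ≤ m := key ▸ inf_le_right
    have h2 : ¬ j ≤ m := fun h => hJ'.ne (by rw [← key, inf_eq_left.2 h])
    have h3 : j ≤ mStar m := le_sInf fun y (hy : m < y) => by
      by_contra h
      refine hy.not_ge (hub y (le_antisymm ?_ (le_inf hJ'.le (h1.trans hy.le))))
      exact le_sSup (lt_of_le_of_ne inf_le_left (fun h' => h (inf_eq_left.1 h')))
    have h4 : m ≤ mStar m := le_sInf fun y (hy : m < y) => hy.le
    refine ⟨m, ⟨lt_of_le_of_ne h4 (fun h => h2 (h3.trans h.ge)), (e1 j m hJ).2 ⟨h1, h2, h3⟩⟩, ?_⟩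
    rintro m' ⟨-, h5⟩
    have hle : m' ≤ m := hub m' (by rw [inf_comm]; exact h5.1)
    by_contra hne
    have h6 : mStar m' ≤ m := sInf_le (lt_of_le_of_ne hle hne)
    exact h2 (((e1 j m' hJ).1 h5).2.2.trans h6)
  · intro m hM
    have hM' : m < mStar m := hM
    have key := hj m (mStar m) {y | m ⊔ y = mStar m} ⟨mStar m, sup_eq_right.2 hM'.le⟩
      (fun y hy => hy)
    have hlb : ∀ y, m ⊔ y = mStar m → sInf {y | m ⊔ y = mStar m} ≤ y := fun y hy => sInf_le hy
    generalize sInf {y | m ⊔ y = mStar m} = j at key hlb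
    have h3 : j ≤ mStar m := key ▸ le_sup_right
    have h2 : ¬ j ≤ m := fun h => hM'.ne (by rw [← key, sup_eq_left.2 h])
    have h1 : jStar j ≤ m := sSup_le fun y (hy : y < j) => by
      by_contra h
      refine hy.not_ge (hlb y (le_antisymm (sup_le hM'.le (hy.le.trans h3)) ?_))
      exact sInf_le (lt_of_le_of_ne le_sup_left (fun h' => h (sup_eq_left.1 h'.symm)))
    have h4 : jStar j ≤ j := sSup_le fun y (hy : y < j) => hy.le
    refine ⟨j, ⟨lt_of_le_of_ne h4 (fun h => h2 (h.ge.trans h1)), (e2 j m hM).2 ⟨h1, h2, h3⟩⟩, ?_⟩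
    rintro j' ⟨-, h5⟩
    have hle : j ≤ j' := hlb j' h5.1
    by_contra hne
    have h6 : j ≤ jStar j' := le_sSup (lt_of_le_of_ne hle (Ne.symm hne))
    exact h2 (h6.trans ((e2 j' m hM).1 h5).1)
end

section
/- Let L be a completely semidistributive complete lattice. Then for every covering pair y ⋗ x in L, one has μ(y ⋗ x) = κ(γ(y ⋗ x)); that is, the completely meet irreducible label of a cover is the image under κ of its completely join irreducible label. -/
theorem mu_eq_kappa_gamma {L : Type*} [CompleteLattice L]
    (hj : CompletelyJoinSemidistributive L) (hm : CompletelyMeetSemidistributive L)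
    (x y : L) (hxy : x ⋖ y) (j m : L)
    (hgamma : CompletelyJoinIrreducible j ∧ x ⊔ j = y ∧ x ⊔ jStar j = x)
    (hmu : CompletelyMeetIrreducible m ∧ m ⊓ y = x ∧ mStar m ⊓ y = y) :
    m ⊓ j = jStar j ∧ mStar m ⊓ j = j := by
  obtain ⟨hj1, hj2, hj3⟩ := hgamma
  obtain ⟨-, hm2, hm3⟩ := hmu
  have hjy : j ≤ y := hj2 ▸ le_sup_right
  have hxm : x ≤ m := hm2 ▸ inf_le_left
  have hsx : jStar j ≤ x := sup_eq_left.mp hj3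
  have hym : y ≤ mStar m := inf_eq_right.mp hm3
  refine ⟨le_antisymm ?_ (le_inf (hsx.trans hxm) hj1.le), inf_eq_right.mpr (hjy.trans hym)⟩
  apply le_sSup
  refine lt_of_le_of_ne inf_le_right fun h => ?_
  have hjx : j ≤ x := hm2 ▸ le_inf (inf_eq_right.mp h) hjy
  have hyx : x = y := by rw [← hj2, sup_eq_left.mpr hjx]
  exact hxy.lt.ne hyx
end

section
/- (Demonet–Iyama–Reading–Reiten–Thomas) The complete lattice tors A of torsion classes of mod A is completely semidistributive: for every torsion class 𝒳 and every nonempty family S of torsion classes such that 𝒳 ∧ 𝒴 has the same value 𝒵 for all 𝒴 ∈ S, one has 𝒳 ∧ ⋁S = 𝒵; and dually, if 𝒳 ∨ 𝒴 = 𝒵 for all 𝒴 ∈ S, then 𝒳 ∨ ⋀S = 𝒵. -/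
open CategoryTheory

/-- The left perpendicular of a module is a torsion class. -/
theorem leftPerp_isTorsionClass_s13 (A : Type) [Ring A] [IsNoetherianRing A] (F : ModuleCat.{0} A) :
    IsTorsionClass A (leftPerp A {F}) := by
  have hq : ∀ M ∈ leftPerp A {F}, ∀ N : ModuleCat.{0} A, ∀ f : M →ₗ[A] N,
      Function.Surjective f → N ∈ leftPerp A {F} := by
    rintro M ⟨hM, h⟩ N f hf
    refine ⟨Module.Finite.of_surjective f hf, ?_⟩
    intro Y hY g
    have h1 := h Y hY (g.comp f)
    ext x
    obtain ⟨y, rfl⟩ := hf x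
    exact LinearMap.congr_fun h1 y
  refine ⟨fun M hM => hM.1, ?_, ?_, hq, ?_⟩
  · rintro M hM N ⟨e⟩
    exact hq M hM N e.toLinearMap e.surjective
  · refine ⟨ModuleCat.of A PUnit, ⟨?_, ?_⟩, ?_⟩
    · change Module.Finite A PUnit
      infer_instance
    · intro Y _ f
      ext x
      have : x = 0 := Subsingleton.elim (α := PUnit) _ _
      rw [this, map_zero, map_zero]
    · change Subsingleton PUnit
      infer_instance
  · rintro X Y Z ⟨hX, hX'⟩ ⟨hZ, hZ'⟩ f g hf hg hfg
    have : IsNoetherian A X := isNoetherian_of_isNoetherianRing_of_finite A X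
    have : IsNoetherian A Z := isNoetherian_of_isNoetherianRing_of_finite A Z
    have : IsNoetherian A Y := isNoetherian_of_range_eq_ker f g hfg
    refine ⟨inferInstance, ?_⟩
    intro W hW p
    have h1 : LinearMap.ker g ≤ LinearMap.ker p := by
      rw [← hfg]
      rintro _ ⟨x, rfl⟩
      exact LinearMap.congr_fun (hX' W hW (p.comp f)) x
    have h2 := hZ' W hW (((LinearMap.ker g).liftQ p h1).comp
      (g.quotKerEquivOfSurjective hg).symm.toLinearMap)
    ext y
    have h3 := LinearMap.congr_fun h2 (g y)
    have h4 : (g.quotKerEquivOfSurjective hg).symm (g y) = (LinearMap.ker g).mkQ y := by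
      rw [LinearEquiv.symm_apply_eq]
      rfl
    simpa [h4] using h3

/-- Extension closure in terms of submodules. -/
theorem IsTorsionClass.ext_sub {A : Type} [Ring A] {T : Set (ModuleCat.{0} A)}
    (hT : IsTorsionClass A T) (M : ModuleCat.{0} A) (N : Submodule A M)
    (h1 : ModuleCat.of A N ∈ T) (h2 : ModuleCat.of A (M ⧸ N) ∈ T) : M ∈ T :=
  hT.2.2.2.2 (ModuleCat.of A N) M (ModuleCat.of A (M ⧸ N)) h1 h2 N.subtype N.mkQ
    N.injective_subtype N.mkQ_surjective (by simp)

theorem IsTorsionClass.of_subsingleton {A : Type} [Ring A] {T : Set (ModuleCat.{0} A)}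
    (hT : IsTorsionClass A T) (M : ModuleCat.{0} A) [Subsingleton M] : M ∈ T := by
  obtain ⟨Z, hZ, _⟩ := hT.2.2.1
  exact hT.2.2.2.1 Z hZ M 0 (fun x => ⟨0, Subsingleton.elim _ _⟩)

/-- Existence of the torsion submodule. -/
theorem IsTorsionClass.exists_torsion {A : Type} [Ring A] {T : Set (ModuleCat.{0} A)}
    (hT : IsTorsionClass A T) (M : ModuleCat.{0} A) [IsNoetherian A M] :
    ∃ N : Submodule A M, ModuleCat.of A N ∈ T ∧
      ∀ X ∈ T, ∀ f : X →ₗ[A] (M ⧸ N), f = 0 := by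
  obtain ⟨N, hN, hmax⟩ := (wellFounded_gt (α := Submodule A M)).has_min
    {N : Submodule A M | ModuleCat.of A N ∈ T}
    ⟨⊥, by
      have : Subsingleton (ModuleCat.of A (⊥ : Submodule A M)) :=
        inferInstanceAs (Subsingleton (⊥ : Submodule A M))
      exact hT.of_subsingleton _⟩
  refine ⟨N, hN, fun X hX f => ?_⟩
  let K : Submodule A M := (LinearMap.range f).comap N.mkQ
  have hNK : N ≤ K := fun x hx => by
    change N.mkQ x ∈ LinearMap.range f
    have : N.mkQ x = 0 := by simpa using hx
    rw [this]
    exact zero_mem _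
  have hR : ModuleCat.of A (LinearMap.range f) ∈ T :=
    hT.2.2.2.1 X hX (ModuleCat.of A (LinearMap.range f)) f.rangeRestrict f.surjective_rangeRestrict
  have hK : ModuleCat.of A K ∈ T := by
    refine hT.2.2.2.2 (ModuleCat.of A N) (ModuleCat.of A K) (ModuleCat.of A (LinearMap.range f))
      hN hR (Submodule.inclusion hNK) (N.mkQ.restrict (p := K) (q := LinearMap.range f)
        (fun x hx => hx)) (Submodule.inclusion_injective hNK) ?_ ?_
    · rintro ⟨y, hy⟩
      obtain ⟨x, rfl⟩ := N.mkQ_surjective y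
      exact ⟨⟨x, hy⟩, rfl⟩
    · ext ⟨x, hx⟩
      constructor
      · rintro ⟨⟨y, hy⟩, h⟩
        have : y = x := congrArg Subtype.val h
        subst this
        apply Subtype.ext
        change N.mkQ y = 0
        simpa using hy
      · intro h
        have h' : N.mkQ x = 0 := congrArg Subtype.val h
        have hxN : x ∈ N := by simpa using h'
        exact ⟨⟨x, hxN⟩, rfl⟩
  have hKN : K = N := by
    by_contra hne
    exact hmax K hK (lt_of_le_of_ne hNK (Ne.symm hne))
  ext x
  obtain ⟨m, hm⟩ := N.mkQ_surjective (f x)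
  have hmK : m ∈ K := by
    change N.mkQ m ∈ LinearMap.range f
    rw [hm]
    exact ⟨x, rfl⟩
  rw [hKN] at hmK
  have h0 : N.mkQ m = 0 := by simpa using hmK
  rw [← hm, h0]
  rfl

theorem tors_semidistrib_meet (A : Type) [Ring A] [IsArtinianRing A] [IsNoetherianRing A]
    (X Z : Set (ModuleCat.{0} A)) (S : Set (Set (ModuleCat.{0} A)))
    (hX : IsTorsionClass A X) (hne : S.Nonempty) (hS : ∀ Y ∈ S, IsTorsionClass A Y)
    (hZ : ∀ Y ∈ S, X ∩ Y = Z) : X ∩ torsJoin A S = Z := by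
  obtain ⟨Y₀, hY₀⟩ := hne
  apply Set.Subset.antisymm
  · suffices H : ∀ (n : ℕ∞) (M : ModuleCat.{0} A), Module.length A M = n →
        M ∈ X → M ∈ torsJoin A S → M ∈ Z from fun M hM => H _ M rfl hM.1 hM.2
    intro n
    induction n using WellFoundedLT.induction with
    | ind n ih =>
    intro M hn hMX hMS
    have hfin : Module.Finite A M := hX.1 M hMX
    have : IsNoetherian A M := isNoetherian_of_isNoetherianRing_of_finite A M
    have : IsArtinian A M := isArtinian_of_fg_of_artinian'
    by_cases hsub : Subsingleton M
    · rw [← hZ Y₀ hY₀]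
      exact ⟨hMX, (hS Y₀ hY₀).of_subsingleton M⟩
    have hex : ∃ Y ∈ S, ∃ L ∈ Y, ∃ f : L →ₗ[A] M, f ≠ 0 := by
      by_contra hcon
      push Not at hcon
      have h := hMS _ (leftPerp_isTorsionClass_s13 A M) (fun Y hY L hL =>
        ⟨(hS Y hY).1 L hL, by
          rintro _ rfl f
          exact hcon Y hY L hL f⟩)
      have hid := h.2 M rfl LinearMap.id
      exact hsub ⟨fun a b => by
        have ha := LinearMap.congr_fun hid a
        have hb := LinearMap.congr_fun hid b
        simp only [LinearMap.id_coe, id_eq, LinearMap.zero_apply] at ha hb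
        rw [ha, hb]⟩
    obtain ⟨Y, hY, L, hL, f, hf⟩ := hex
    have hR : ModuleCat.of A (LinearMap.range f) ∈ Y :=
      (hS Y hY).2.2.2.1 L hL (ModuleCat.of A (LinearMap.range f)) f.rangeRestrict f.surjective_rangeRestrict
    have hlt : Module.length A (M ⧸ LinearMap.range f) < n := by
      rw [← hn]
      exact Submodule.length_quotient_lt _ (fun h => hf (LinearMap.range_eq_bot.mp h))
    have hQX : ModuleCat.of A (M ⧸ LinearMap.range f) ∈ X :=
      hX.2.2.2.1 M hMX _ (LinearMap.range f).mkQ (LinearMap.range f).mkQ_surjective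
    have hQS : ModuleCat.of A (M ⧸ LinearMap.range f) ∈ torsJoin A S := fun W hW hSW =>
      hW.2.2.2.1 M (hMS W hW hSW) _ (LinearMap.range f).mkQ (LinearMap.range f).mkQ_surjective
    have hQZ := ih _ hlt (ModuleCat.of A (M ⧸ LinearMap.range f)) rfl hQX hQS
    rw [← hZ Y hY] at hQZ ⊢
    exact ⟨hMX, (hS Y hY).ext_sub M _ hR hQZ.2⟩
  · rw [← hZ Y₀ hY₀]
    exact fun M hM => ⟨hM.1, fun W _ h => h Y₀ hY₀ hM.2⟩

theorem tors_semidistrib_join (A : Type) [Ring A] [IsArtinianRing A] [IsNoetherianRing A]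
    (X Z : Set (ModuleCat.{0} A)) (S : Set (Set (ModuleCat.{0} A)))
    (hX : IsTorsionClass A X) (hne : S.Nonempty) (hS : ∀ Y ∈ S, IsTorsionClass A Y)
    (hZ : ∀ Y ∈ S, torsJoin A {X, Y} = Z) : torsJoin A {X, ⋂₀ S} = Z := by
  obtain ⟨Y₀, hY₀⟩ := hne
  have hYZ : ∀ Y ∈ S, Y ⊆ Z := fun Y hY M hM => by
    rw [← hZ Y hY]
    exact fun W _ h => h Y (by simp) hM
  apply Set.Subset.antisymm
  · intro M hM
    rw [← hZ Y₀ hY₀]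
    intro W hW h
    refine hM W hW ?_
    rintro T (rfl | rfl)
    · exact h _ (by simp)
    · exact fun N hN => h Y₀ (by simp) (hN Y₀ hY₀)
  · have key : ∀ (n : ℕ∞) (F : ModuleCat.{0} A), Module.length A F = n → Module.Finite A F →
        (∀ L ∈ X, ∀ f : L →ₗ[A] F, f = 0) → (∀ L ∈ ⋂₀ S, ∀ f : L →ₗ[A] F, f = 0) →
        ∀ L ∈ Z, ∀ f : L →ₗ[A] F, f = 0 := by
      intro n
      induction n using WellFoundedLT.induction with
      | ind n ih =>
      intro F hn hfin hFX hFS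
      have : IsNoetherian A F := isNoetherian_of_isNoetherianRing_of_finite A F
      have : IsArtinian A F := isArtinian_of_fg_of_artinian'
      by_cases hF : F ∈ ⋂₀ S
      · intro L _ f
        have hid := hFS F hF LinearMap.id
        ext x
        exact LinearMap.congr_fun hid (f x)
      · have : ∃ Y ∈ S, F ∉ Y := by simpa using hF
        obtain ⟨Y, hY, hFY⟩ := this
        obtain ⟨N, hN, hNf⟩ := (hS Y hY).exists_torsion F
        have hNtop : N ≠ ⊤ := by
          rintro rfl
          exact hFY ((hS Y hY).2.1 _ hN F ⟨Submodule.topEquiv⟩)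
        have hlt : Module.length A N < n := by
          rw [← hn]
          exact Submodule.length_lt hNtop
        have hin : ∀ (L : ModuleCat.{0} A) (f : L →ₗ[A] N), N.subtype.comp f = 0 → f = 0 := by
          intro L f h
          ext x
          exact LinearMap.congr_fun h x
        have hNZ := ih _ hlt (ModuleCat.of A N) rfl (inferInstanceAs (Module.Finite A N))
          (fun L hL f => hin L f (hFX L hL _)) (fun L hL f => hin L f (hFS L hL _))
        have hid : (LinearMap.id : N →ₗ[A] N) = 0 := hNZ (ModuleCat.of A N) (hYZ Y hY hN) _
        have hFYp : ∀ L ∈ Y, ∀ f : L →ₗ[A] F, f = 0 := by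
          intro L hL f
          have h1 := hNf L hL (N.mkQ.comp f)
          ext x
          have h2 : N.mkQ (f x) = 0 := LinearMap.congr_fun h1 x
          have h3 : f x ∈ N := by simpa using h2
          exact congrArg Subtype.val (LinearMap.congr_fun hid ⟨f x, h3⟩)
        intro L hL f
        rw [← hZ Y hY] at hL
        refine (hL _ (leftPerp_isTorsionClass_s13 A F) ?_).2 F rfl f
        rintro T (rfl | rfl) L hL
        · exact ⟨hX.1 L hL, by rintro _ rfl f; exact hFX L hL f⟩
        · exact ⟨(hS _ hY).1 L hL, by rintro _ rfl f; exact hFYp L hL f⟩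
    intro M hM W hW hle
    have hZfin : Module.Finite A M := by
      have h := hM
      rw [← hZ Y₀ hY₀] at h
      refine (h _ (leftPerp_isTorsionClass_s13 A (ModuleCat.of A PUnit)) ?_).1
      have hz : ∀ (L : ModuleCat.{0} A), Module.Finite A L →
          L ∈ leftPerp A {ModuleCat.of A PUnit} := by
        intro L hL
        refine ⟨hL, ?_⟩
        rintro _ rfl f
        ext x
      rintro T (rfl | rfl) L hL
      · exact hz L (hX.1 L hL)
      · exact hz L ((hS _ hY₀).1 L hL)
    have : IsNoetherian A M := isNoetherian_of_isNoetherianRing_of_finite A M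
    obtain ⟨N, hN, hNf⟩ := hW.exists_torsion M
    have h0 : N.mkQ = 0 := key _ (ModuleCat.of A (M ⧸ N)) rfl
      (inferInstanceAs (Module.Finite A (M ⧸ N)))
      (fun L hL f => hNf L (hle X (by simp) hL) f)
      (fun L hL f => hNf L (hle _ (by simp) hL) f) M hM N.mkQ
    have htop : N = ⊤ := by
      rw [← N.ker_mkQ, h0, LinearMap.ker_zero]
    subst htop
    exact hW.2.1 _ hN M ⟨Submodule.topEquiv⟩

theorem tors_completelySemidistributive
    (k A : Type) [Field k] [Ring A] [Algebra k A] [FiniteDimensional k A] :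
    (∀ (𝒳 𝒵 : Set (ModuleCat.{0} A)) (S : Set (Set (ModuleCat.{0} A))),
      IsTorsionClass A 𝒳 → S.Nonempty → (∀ 𝒴 ∈ S, IsTorsionClass A 𝒴) →
      (∀ 𝒴 ∈ S, 𝒳 ∩ 𝒴 = 𝒵) → 𝒳 ∩ torsJoin A S = 𝒵) ∧
    (∀ (𝒳 𝒵 : Set (ModuleCat.{0} A)) (S : Set (Set (ModuleCat.{0} A))),
      IsTorsionClass A 𝒳 → S.Nonempty → (∀ 𝒴 ∈ S, IsTorsionClass A 𝒴) →
      (∀ 𝒴 ∈ S, torsJoin A {𝒳, 𝒴} = 𝒵) → torsJoin A {𝒳, ⋂₀ S} = 𝒵) := by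
  have : IsArtinianRing A := IsArtinianRing.of_finite k A
  have : IsNoetherianRing A := IsNoetherianRing.of_finite k A
  exact ⟨fun X Z S h1 h2 h3 h4 => tors_semidistrib_meet A X Z S h1 h2 h3 h4,
    fun X Z S h1 h2 h3 h4 => tors_semidistrib_join A X Z S h1 h2 h3 h4⟩
end

section
/- (Demonet–Iyama–Reading–Reiten–Thomas) Let I be a two-sided ideal of A, and identify mod A/I with the full subcategory of mod A consisting of modules annihilated by I. If (𝒯, ℱ) is a torsion pair in mod A (i.e. 𝒯⊥ = ℱ and ⊥ℱ = 𝒯), then (𝒯 ∩ mod A/I, ℱ ∩ mod A/I) is a torsion pair in mod A/I: the perpendicular of 𝒯 ∩ mod A/I computed inside mod A/I equals ℱ ∩ mod A/I, and the left perpendicular of ℱ ∩ mod A/I inside mod A/I equals 𝒯 ∩ mod A/I. -/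
open CategoryTheory

/-- The modules in `mod A` annihilated by the two-sided ideal `I`, i.e. `mod A/I`. -/
def modAnn (A : Type) [Ring A] (I : TwoSidedIdeal A) : Set (ModuleCat.{0} A) :=
  {M | Module.Finite A M ∧ ∀ a ∈ I, ∀ m : M, a • m = 0}

theorem torsionPair_restricts_to_quotient
    (k A : Type) [Field k] [Ring A] [Algebra k A] [FiniteDimensional k A]
    (I : TwoSidedIdeal A) (𝒯 ℱ : Set (ModuleCat.{0} A))
    (h𝒯 : IsTorsionClass A 𝒯) (hTF : rightPerp A 𝒯 = ℱ) (hFT : leftPerp A ℱ = 𝒯) :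
    {Y | Y ∈ modAnn A I ∧ ∀ X ∈ 𝒯 ∩ modAnn A I, ∀ f : X →ₗ[A] Y, f = 0}
        = ℱ ∩ modAnn A I ∧
    {X | X ∈ modAnn A I ∧ ∀ Y ∈ ℱ ∩ modAnn A I, ∀ f : X →ₗ[A] Y, f = 0}
        = 𝒯 ∩ modAnn A I := by
  obtain ⟨hfin, -, -, hquot, -⟩ := h𝒯
  constructor
  · ext Y
    constructor
    · rintro ⟨hY, h⟩
      refine ⟨?_, hY⟩
      rw [← hTF]
      refine ⟨hY.1, fun X hX f => ?_⟩
      have hXf : Module.Finite A X := hfin X hX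
      have hR : ModuleCat.of A (LinearMap.range f) ∈ 𝒯 :=
        hquot X hX (ModuleCat.of A (LinearMap.range f)) f.rangeRestrict
          f.surjective_rangeRestrict
      have h0 : (LinearMap.range f).subtype = 0 :=
        h (ModuleCat.of A (LinearMap.range f))
          ⟨hR, hfin _ hR, fun a ha m => Subtype.ext (hY.2 a ha m.1)⟩
          (LinearMap.range f).subtype
      ext x
      exact LinearMap.congr_fun h0 (f.rangeRestrict x)
    · rintro ⟨hF, hY⟩
      rw [← hTF] at hF
      exact ⟨hY, fun X hX f => hF.2 X hX.1 f⟩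
  · ext X
    constructor
    · rintro ⟨hX, h⟩
      refine ⟨?_, hX⟩
      rw [← hFT]
      refine ⟨hX.1, fun Y hY f => ?_⟩
      have hXf : Module.Finite A X := hX.1
      have hRfin : Module.Finite A (LinearMap.range f) :=
        Module.Finite.of_surjective f.rangeRestrict f.surjective_rangeRestrict
      rw [← hTF] at hY
      have hR : ModuleCat.of A (LinearMap.range f) ∈ ℱ := by
        rw [← hTF]
        refine ⟨hRfin, fun Z hZ (g : Z →ₗ[A] LinearMap.range f) => ?_⟩
        have h1 : (LinearMap.range f).subtype.comp g = 0 := hY.2 Z hZ _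
        refine LinearMap.ext fun z => Subtype.ext ?_
        exact LinearMap.congr_fun h1 z
      have hann : ∀ a ∈ I, ∀ m : LinearMap.range f, a • m = 0 := by
        rintro a ha ⟨_, x, rfl⟩
        refine Subtype.ext ?_
        change a • f x = 0
        rw [← map_smul, hX.2 a ha x, map_zero]
      have h0 : f.rangeRestrict = 0 :=
        h (ModuleCat.of A (LinearMap.range f)) ⟨hR, hRfin, hann⟩ f.rangeRestrict
      ext x
      exact congrArg Subtype.val (LinearMap.congr_fun h0 x)
    · rintro ⟨hT, hX⟩
      rw [← hFT] at hT
      exact ⟨hX, fun Y hY f => hT.2 Y hY.1 f⟩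
end

section
/- Let 𝒰 ⊆ 𝒱 be torsion classes in mod A. The following are equivalent: (1) 𝒰 ⊊ 𝒱; (2) 𝒰⊥ ∩ 𝒱 contains a nonzero module; (3) 𝒰⊥ ∩ 𝒱 contains a brick. -/
open CategoryTheory

theorem perp_aux_iff1 {A : Type} [Ring A] {𝒰 𝒱 : Set (ModuleCat.{0} A)} [IsNoetherianRing A]
    (h𝒰 : IsTorsionClass A 𝒰) (h𝒱 : IsTorsionClass A 𝒱) (hs : 𝒰 ⊂ 𝒱) :
    ∃ M ∈ rightPerp A 𝒰 ∩ 𝒱, Nontrivial M := by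
  obtain ⟨M, hMV, hMU⟩ := Set.exists_of_ssubset hs
  obtain ⟨-, isoU, ⟨Z, hZ, hZs⟩, quotU, extU⟩ := h𝒰
  have hfin : Module.Finite A M := h𝒱.1 M hMV
  have hne : ({N : Submodule A M | ModuleCat.of A N ∈ 𝒰}).Nonempty := by
    refine ⟨⊥, quotU Z hZ _ (0 : Z →ₗ[A] (⊥ : Submodule A M)) ?_⟩
    intro x
    exact ⟨0, Subsingleton.elim (α := (⊥ : Submodule A M)) _ _⟩
  obtain ⟨T, hT, hmax⟩ := set_has_maximal_iff_noetherian.mpr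
    (inferInstance : IsNoetherian A M) _ hne
  refine ⟨ModuleCat.of A (M ⧸ T), ⟨⟨?_, ?_⟩, ?_⟩, ?_⟩
  · change Module.Finite A (M ⧸ T)
    infer_instance
  · intro X hX f
    change X →ₗ[A] (M ⧸ T) at f
    let N : Submodule A M := (LinearMap.range f).comap T.mkQ
    have hTN : T ≤ N := fun x hx => by
      change T.mkQ x ∈ LinearMap.range f
      have : T.mkQ x = 0 := by simpa using hx
      rw [this]; exact zero_mem _
    have hR : ModuleCat.of A (LinearMap.range f) ∈ 𝒰 :=
      quotU X hX _ f.rangeRestrict f.surjective_rangeRestrict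
    have hN : ModuleCat.of A N ∈ 𝒰 := by
      let g : N →ₗ[A] LinearMap.range f := T.mkQ.restrict (fun x hx => hx)
      refine extU (ModuleCat.of A T) (ModuleCat.of A N) (ModuleCat.of A (LinearMap.range f)) hT hR
        (Submodule.inclusion hTN) g (Submodule.inclusion_injective hTN) ?_ ?_
      · rintro ⟨y, hy⟩
        obtain ⟨x, rfl⟩ := T.mkQ_surjective y
        exact ⟨⟨x, hy⟩, rfl⟩
      · change LinearMap.range (Submodule.inclusion hTN) = LinearMap.ker g
        ext ⟨x, hx⟩
        have h1 : g ⟨x, hx⟩ = 0 ↔ x ∈ T := by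
          rw [← Submodule.Quotient.mk_eq_zero T, Subtype.ext_iff]
          rfl
        rw [LinearMap.mem_ker, h1, Submodule.range_inclusion]
        rfl
    have hNT : N ≤ T := by
      by_contra hc
      exact hmax N hN (lt_of_le_not_ge hTN hc)
    ext x
    obtain ⟨m, hm⟩ := T.mkQ_surjective (f x)
    have : m ∈ N := by
      change T.mkQ m ∈ LinearMap.range f
      rw [hm]; exact ⟨x, rfl⟩
    have h2 : T.mkQ m = 0 := by simpa using hNT this
    change f x = 0
    rw [← hm, h2]
  · exact h𝒱.2.2.2.1 M hMV _ T.mkQ T.mkQ_surjective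
  · change Nontrivial (M ⧸ T)
    rw [Submodule.Quotient.nontrivial_iff]
    rintro rfl
    exact hMU (isoU _ hT M ⟨Submodule.topEquiv⟩)

theorem perp_aux_brick {A : Type} [Ring A] {𝒰 𝒱 : Set (ModuleCat.{0} A)} [IsNoetherianRing A]
    [IsArtinianRing A] (h𝒱 : IsTorsionClass A 𝒱)
    (hs : ∃ M ∈ rightPerp A 𝒰 ∩ 𝒱, Nontrivial M) :
    ∃ B ∈ rightPerp A 𝒰 ∩ 𝒱, IsBrick A B := by
  obtain ⟨M, ⟨⟨hfin, hperp⟩, hMV⟩, hnt⟩ := hs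
  have hfin' : Module.Finite A M := hfin
  obtain ⟨-, isoV, -, quotV, -⟩ := h𝒱
  have hne : ({N : Submodule A M | N ≠ ⊥ ∧ ModuleCat.of A N ∈ 𝒱}).Nonempty :=
    ⟨⊤, top_ne_bot, isoV M hMV _ ⟨Submodule.topEquiv.symm⟩⟩
  obtain ⟨N, ⟨hN0, hNV⟩, hmin⟩ := set_has_minimal_iff_artinian.mpr
    (inferInstance : IsArtinian A M) _ hne
  have hNf : Module.Finite A N := inferInstance
  refine ⟨ModuleCat.of A N, ⟨⟨hNf, ?_⟩, hNV⟩, hNf, Submodule.nontrivial_iff_ne_bot.mpr hN0, ?_⟩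
  · intro X hX f
    change X →ₗ[A] N at f
    have h0 := hperp X hX (N.subtype.comp f)
    ext x
    exact LinearMap.congr_fun h0 x
  · intro f hf
    change N →ₗ[A] N at f
    let g : N →ₗ[A] M := N.subtype.comp f
    have hg0 : LinearMap.range g ≠ ⊥ := by
      intro h0
      apply hf
      rw [LinearMap.range_eq_bot] at h0
      ext x
      exact LinearMap.congr_fun h0 x
    have hgV : ModuleCat.of A (LinearMap.range g) ∈ 𝒱 :=
      quotV _ hNV _ g.rangeRestrict g.surjective_rangeRestrict
    have hle : LinearMap.range g ≤ N := by
      rintro _ ⟨x, rfl⟩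
      exact (f x).2
    have hge : N ≤ LinearMap.range g := by
      by_contra hc
      exact hmin _ ⟨hg0, hgV⟩ (lt_of_le_not_ge hle hc)
    have hsurj : Function.Surjective f := by
      rintro ⟨y, hy⟩
      obtain ⟨x, hx⟩ := hge hy
      exact ⟨x, Subtype.ext hx⟩
    exact ⟨IsNoetherian.injective_of_surjective_endomorphism f hsurj, hsurj⟩

theorem perp_aux_back {A : Type} [Ring A] {𝒰 𝒱 : Set (ModuleCat.{0} A)} (h : 𝒰 ⊆ 𝒱)
    (hs : ∃ M ∈ rightPerp A 𝒰 ∩ 𝒱, Nontrivial M) : 𝒰 ⊂ 𝒱 := by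
  obtain ⟨M, ⟨⟨-, hperp⟩, hMV⟩, hnt⟩ := hs
  refine ⟨h, fun hVU => ?_⟩
  have h0 := hperp M (hVU hMV) LinearMap.id
  obtain ⟨x, hx⟩ := exists_ne (0 : M)
  exact hx (LinearMap.congr_fun h0 x)

theorem strict_inclusion_iff_brick_in_perp_inter
    (k A : Type) [Field k] [Ring A] [Algebra k A] [FiniteDimensional k A]
    (𝒰 𝒱 : Set (ModuleCat.{0} A))
    (h𝒰 : IsTorsionClass A 𝒰) (h𝒱 : IsTorsionClass A 𝒱) (h : 𝒰 ⊆ 𝒱) :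
    (𝒰 ⊂ 𝒱 ↔ ∃ M ∈ rightPerp A 𝒰 ∩ 𝒱, Nontrivial M) ∧
    (𝒰 ⊂ 𝒱 ↔ ∃ B ∈ rightPerp A 𝒰 ∩ 𝒱, IsBrick A B) := by
  have : IsNoetherianRing A := isNoetherian_of_tower k (inferInstance : IsNoetherian k A)
  have : IsArtinianRing A := isArtinian_of_tower k (inferInstance : IsArtinian k A)
  refine ⟨⟨perp_aux_iff1 h𝒰 h𝒱, perp_aux_back h⟩,
    ⟨fun hs => perp_aux_brick h𝒱 (perp_aux_iff1 h𝒰 h𝒱 hs), ?_⟩⟩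
  rintro ⟨B, hB, hb⟩
  exact perp_aux_back h ⟨B, hB, hb.2.1⟩
end

section
/- (Relative Barnard–Carroll–Zhu bijection) Let 𝒰 ⊆ 𝒱 be torsion classes in mod A. Then the map B ↦ T(B) ∨ 𝒰 induces a bijection from the set of isomorphism classes of bricks contained in 𝒰⊥ ∩ 𝒱 to the set of completely join irreducible elements of the interval [𝒰, 𝒱] in tors A (completely join irreducible as elements of the complete lattice [𝒰, 𝒱]). -/
open CategoryTheory

/-- A completely join irreducible element of the interval `[𝒰, 𝒱]` in `tors A`:
a torsion class `𝒥` with `𝒰 ⊆ 𝒥 ⊆ 𝒱` possessing a torsion class `𝒥₊` in the interval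
such that, for every torsion class `𝒴` in the interval, `𝒴 ⊊ 𝒥` iff `𝒴 ⊆ 𝒥₊`. -/
def IsCJIInterval (A : Type) [Ring A] (𝒰 𝒱 𝒥 : Set (ModuleCat.{0} A)) : Prop :=
  IsTorsionClass A 𝒥 ∧ 𝒰 ⊆ 𝒥 ∧ 𝒥 ⊆ 𝒱 ∧
  ∃ 𝒥s, IsTorsionClass A 𝒥s ∧ 𝒰 ⊆ 𝒥s ∧ 𝒥s ⊆ 𝒱 ∧
    ∀ 𝒴, IsTorsionClass A 𝒴 → 𝒰 ⊆ 𝒴 → 𝒴 ⊆ 𝒱 → (𝒴 ⊂ 𝒥 ↔ 𝒴 ⊆ 𝒥s)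

lemma torsAux_perp {A : Type} [Ring A] {𝒯 : Set (ModuleCat.{0} A)} (h : IsTorsionClass A 𝒯)
    (Y : ModuleCat.{0} A) : IsTorsionClass A {X | X ∈ 𝒯 ∧ ∀ f : X →ₗ[A] Y, f = 0} := by
  obtain ⟨h1, h2, ⟨Z, hZ, hZs⟩, h4, h5⟩ := h
  refine ⟨fun M hM => h1 M hM.1, ?_, ⟨Z, ⟨hZ, fun f => ?_⟩, hZs⟩, ?_, ?_⟩
  · rintro M ⟨hM, hM'⟩ N ⟨e⟩
    refine ⟨h2 M hM N ⟨e⟩, fun f => ?_⟩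
    have := hM' (f ∘ₗ e.toLinearMap)
    ext x
    simpa using LinearMap.congr_fun this (e.symm x)
  · ext x
    rw [Subsingleton.elim x 0]; simp
  · rintro M ⟨hM, hM'⟩ N g hg
    refine ⟨h4 M hM N g hg, fun f => ?_⟩
    have := hM' (f ∘ₗ g)
    ext x
    obtain ⟨y, rfl⟩ := hg x
    simpa using LinearMap.congr_fun this y
  · rintro X W Z' ⟨hX, hX'⟩ ⟨hZ', hZ''⟩ f g hf hg hfg
    refine ⟨h5 X W Z' hX hZ' f g hf hg hfg, fun u => ?_⟩
    have hu : LinearMap.ker g ≤ LinearMap.ker u := by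
      rw [← hfg]
      rintro _ ⟨x, rfl⟩
      simpa using LinearMap.congr_fun (hX' (u ∘ₗ f)) x
    have key := hZ'' (((LinearMap.ker g).liftQ u hu) ∘ₗ
      (g.quotKerEquivOfSurjective hg).symm.toLinearMap)
    ext x
    have := LinearMap.congr_fun key (g x)
    have e : (g.quotKerEquivOfSurjective hg).symm (g x) = (LinearMap.ker g).mkQ x := by
      rw [LinearEquiv.symm_apply_eq]; rfl
    simpa [e] using this

lemma torsAux_join {A : Type} [Ring A] {S : Set (Set (ModuleCat.{0} A))}
    {𝒱 : Set (ModuleCat.{0} A)} (h𝒱 : IsTorsionClass A 𝒱) (hS : ∀ 𝒯 ∈ S, 𝒯 ⊆ 𝒱) :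
    IsTorsionClass A (torsJoin A S) := by
  refine ⟨fun M hM => h𝒱.1 M (hM _ h𝒱 hS), ?_, ⟨ModuleCat.of A PUnit, ?_, ?_⟩, ?_, ?_⟩
  · intro M hM N e 𝒲 h𝒲 hle
    exact h𝒲.2.1 M (hM 𝒲 h𝒲 hle) N e
  · intro 𝒲 h𝒲 hle
    obtain ⟨Z, hZ, hs⟩ := h𝒲.2.2.1
    exact h𝒲.2.2.2.1 Z hZ _ 0 (fun y => ⟨0, Subsingleton.elim (α := PUnit) _ _⟩)
  · exact inferInstanceAs (Subsingleton PUnit)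
  · intro M hM N f hf 𝒲 h𝒲 hle
    exact h𝒲.2.2.2.1 M (hM 𝒲 h𝒲 hle) N f hf
  · intro X Y Z hX hZ f g hf hg hfg 𝒲 h𝒲 hle
    exact h𝒲.2.2.2.2 X Y Z (hX 𝒲 h𝒲 hle) (hZ 𝒲 h𝒲 hle) f g hf hg hfg

lemma torsAux_Tgen_le {A : Type} [Ring A] {𝒲 : Set (ModuleCat.{0} A)} (h : IsTorsionClass A 𝒲)
    {B : ModuleCat.{0} A} (hB : B ∈ 𝒲) : Tgen A B ⊆ 𝒲 :=
  fun _ hX => hX 𝒲 h (by simpa using hB)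

lemma torsAux_le {A : Type} [Ring A] {𝒰 𝒲 : Set (ModuleCat.{0} A)} (h : IsTorsionClass A 𝒲)
    {B : ModuleCat.{0} A} (hB : B ∈ 𝒲) (hU : 𝒰 ⊆ 𝒲) : ∀ 𝒯 ∈ ({Tgen A B, 𝒰} : Set _), 𝒯 ⊆ 𝒲 := by
  rintro 𝒯 (rfl | rfl)
  · exact torsAux_Tgen_le h hB
  · exact hU

lemma torsAux_join_le {A : Type} [Ring A] {𝒰 𝒲 : Set (ModuleCat.{0} A)}
    (h : IsTorsionClass A 𝒲) {B : ModuleCat.{0} A} (hB : B ∈ 𝒲) (hU : 𝒰 ⊆ 𝒲) :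
    torsJoin A {Tgen A B, 𝒰} ⊆ 𝒲 :=
  fun _ hX => hX 𝒲 h (torsAux_le h hB hU)

lemma torsAux_mem {A : Type} [Ring A] (𝒰 : Set (ModuleCat.{0} A)) (B : ModuleCat.{0} A) :
    B ∈ torsJoin A {Tgen A B, 𝒰} := by
  intro 𝒲 _ hle
  apply hle (Tgen A B) (by simp)
  intro 𝒯 _ hB
  exact hB rfl

lemma torsAux_U {A : Type} [Ring A] (𝒰 : Set (ModuleCat.{0} A)) (B : ModuleCat.{0} A) :
    𝒰 ⊆ torsJoin A {Tgen A B, 𝒰} := by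
  intro X hX 𝒲 _ hle
  exact hle 𝒰 (by simp) hX

/-- A nonzero object of `T(B) ∨ 𝒰` lying in `𝒰⊥` receives a nonzero map from `B`. -/
lemma torsAux_hom {A : Type} [Ring A] {𝒰 𝒱 : Set (ModuleCat.{0} A)} (h𝒱 : IsTorsionClass A 𝒱)
    (h𝒰𝒱 : 𝒰 ⊆ 𝒱) {B I : ModuleCat.{0} A} (hB : B ∈ 𝒱) (hI : I ∈ torsJoin A {Tgen A B, 𝒰})
    (hU : ∀ X ∈ 𝒰, ∀ f : X →ₗ[A] I, f = 0) (hn : Nontrivial I) :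
    ∃ f : B →ₗ[A] I, f ≠ 0 := by
  by_contra! hc
  have h := torsAux_join_le (torsAux_perp h𝒱 I) (B := B) (𝒰 := 𝒰) ⟨hB, hc⟩
    (fun X hX => ⟨h𝒰𝒱 hX, hU X hX⟩) hI
  have h' := h.2 LinearMap.id
  obtain ⟨x, hx⟩ := exists_ne (0 : I)
  exact hx (by simpa using LinearMap.congr_fun h' x)

/-- A nonzero map from an object of `T(B) ∨ 𝒰` to the brick `B ∈ 𝒰⊥ ∩ 𝒱` is onto. -/
lemma torsAux_surj {A : Type} [Ring A] {𝒰 𝒱 : Set (ModuleCat.{0} A)} (h𝒱 : IsTorsionClass A 𝒱)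
    (h𝒰𝒱 : 𝒰 ⊆ 𝒱) {B X : ModuleCat.{0} A} (hbr : IsBrick A B) (hBU : B ∈ rightPerp A 𝒰)
    (hB : B ∈ 𝒱) (hX : X ∈ torsJoin A {Tgen A B, 𝒰}) (f : X →ₗ[A] B) (hf : f ≠ 0) :
    Function.Surjective f := by
  have hJ : IsTorsionClass A (torsJoin A {Tgen A B, 𝒰}) :=
    torsAux_join h𝒱 (torsAux_le h𝒱 hB h𝒰𝒱)
  have hI : ModuleCat.of A (LinearMap.range f) ∈ torsJoin A {Tgen A B, 𝒰} :=
    hJ.2.2.2.1 X hX _ f.rangeRestrict f.surjective_rangeRestrict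
  obtain ⟨g, hg⟩ := torsAux_hom h𝒱 h𝒰𝒱 hB hI (by
    intro Y hY u
    have := hBU.2 Y hY ((LinearMap.range f).subtype ∘ₗ u)
    ext x
    simpa using LinearMap.congr_fun this x) (by
    change Nontrivial (LinearMap.range f)
    rw [Submodule.nontrivial_iff_ne_bot]
    simpa [LinearMap.range_eq_bot] using hf)
  have hne : (LinearMap.range f).subtype ∘ₗ g ≠ 0 := by
    intro h0
    apply hg
    ext x
    simpa using LinearMap.congr_fun h0 x
  have hs := (hbr.2.2 _ hne).2
  intro b
  obtain ⟨c, hc⟩ := hs b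
  obtain ⟨x, hx⟩ := (g c).2
  exact ⟨x, hx.trans hc⟩

lemma torsAux_brick {A : Type} [Ring A] [IsNoetherianRing A] [IsArtinianRing A]
    {𝒥 𝒮 : Set (ModuleCat.{0} A)} (hJ : IsTorsionClass A 𝒥) (hS : IsTorsionClass A 𝒮)
    (hn : ¬ 𝒥 ⊆ 𝒮) : ∃ B ∈ 𝒥, B ∉ 𝒮 ∧ IsBrick A B ∧ B ∈ rightPerp A 𝒮 := by
  obtain ⟨X, hXJ, hXS⟩ := Set.not_subset.1 hn
  have := hJ.1 X hXJ
  let P : Set (Submodule A X) := {N | ModuleCat.of A (X ⧸ N) ∉ 𝒮}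
  have hP : P.Nonempty := by
    refine ⟨⊥, fun h => hXS ?_⟩
    exact hS.2.1 _ h X ⟨Submodule.quotEquivOfEqBot ⊥ rfl⟩
  obtain ⟨N, hN, hmax⟩ := set_has_maximal_iff_noetherian.2 (inferInstanceAs (IsNoetherian A X)) P hP
  have hMJ : ModuleCat.of A (X ⧸ N) ∈ 𝒥 := hJ.2.2.2.1 X hXJ _ N.mkQ N.mkQ_surjective
  have hfin : Module.Finite A (X ⧸ N) := inferInstance
  -- every proper quotient lies in 𝒮
  have hq : ∀ (Q : ModuleCat.{0} A) (q : (X ⧸ N) →ₗ[A] Q), Function.Surjective q →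
      ¬ Function.Injective q → Q ∈ 𝒮 := by
    intro Q q hqs hqi
    by_contra hQ
    have hs : Function.Surjective (q ∘ₗ N.mkQ) := hqs.comp N.mkQ_surjective
    refine hmax (LinearMap.ker (q ∘ₗ N.mkQ)) ?_ (lt_of_le_of_ne ?_ ?_)
    · intro h
      exact hQ (hS.2.1 _ h Q ⟨(q ∘ₗ N.mkQ).quotKerEquivOfSurjective hs⟩)
    · intro x hx
      simp [(Submodule.Quotient.mk_eq_zero N).2 hx]
    · intro he
      apply hqi
      rw [← LinearMap.ker_eq_bot, eq_bot_iff]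
      intro y hy
      obtain ⟨x, rfl⟩ := N.mkQ_surjective y
      have : x ∈ LinearMap.ker (q ∘ₗ N.mkQ) := by simpa using hy
      rw [← he] at this
      simpa using this
  have hperp : ∀ Y ∈ 𝒮, ∀ g : Y →ₗ[A] (X ⧸ N), g = 0 := by
    intro Y hY g
    by_contra hg
    apply hN
    have hr : ModuleCat.of A (LinearMap.range g) ∈ 𝒮 :=
      hS.2.2.2.1 Y hY _ g.rangeRestrict g.surjective_rangeRestrict
    have hqr : ModuleCat.of A ((X ⧸ N) ⧸ LinearMap.range g) ∈ 𝒮 := by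
      refine hq _ (LinearMap.range g).mkQ (Submodule.mkQ_surjective _) ?_
      rw [← LinearMap.ker_eq_bot, Submodule.ker_mkQ, LinearMap.range_eq_bot]
      exact hg
    exact hS.2.2.2.2 _ (ModuleCat.of A (X ⧸ N)) _ hr hqr (LinearMap.range g).subtype
      (LinearMap.range g).mkQ (Submodule.subtype_injective _) (Submodule.mkQ_surjective _)
      (by rw [Submodule.range_subtype, Submodule.ker_mkQ])
  refine ⟨ModuleCat.of A (X ⧸ N), hMJ, hN, ⟨hfin, ?_, ?_⟩, hfin, hperp⟩
  · by_contra hnt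
    rw [not_nontrivial_iff_subsingleton] at hnt
    obtain ⟨Z, hZ, hs⟩ := hS.2.2.1
    exact hN (hS.2.2.2.1 Z hZ _ 0 (fun y => ⟨0, Subsingleton.elim _ _⟩))
  · intro f hf
    have hinj : Function.Injective f := by
      by_contra hni
      have hr : ModuleCat.of A (LinearMap.range f) ∈ 𝒮 := by
        refine hq _ f.rangeRestrict f.surjective_rangeRestrict ?_
        intro h
        apply hni
        intro a b hab
        exact h (Subtype.ext hab)
      have h0 := hperp _ hr (LinearMap.range f).subtype
      apply hf
      refine LinearMap.ext fun x => ?_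
      exact LinearMap.congr_fun h0 ⟨f x, x, rfl⟩
    have : IsArtinian A (ModuleCat.of A (X ⧸ N)) := inferInstanceAs (IsArtinian A (X ⧸ N))
    exact IsArtinian.bijective_of_injective_endomorphism f hinj

theorem relative_brick_cji_bijection
    (k A : Type) [Field k] [Ring A] [Algebra k A] [FiniteDimensional k A]
    (𝒰 𝒱 : Set (ModuleCat.{0} A))
    (h𝒰 : IsTorsionClass A 𝒰) (h𝒱 : IsTorsionClass A 𝒱) (h𝒰𝒱 : 𝒰 ⊆ 𝒱) :
    (∀ B, IsBrick A B → B ∈ rightPerp A 𝒰 → B ∈ 𝒱 →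
      IsCJIInterval A 𝒰 𝒱 (torsJoin A {Tgen A B, 𝒰})) ∧
    (∀ 𝒥, IsCJIInterval A 𝒰 𝒱 𝒥 →
      ∃ B, IsBrick A B ∧ B ∈ rightPerp A 𝒰 ∧ B ∈ 𝒱 ∧ 𝒥 = torsJoin A {Tgen A B, 𝒰}) ∧
    (∀ B B', IsBrick A B → IsBrick A B' →
      B ∈ rightPerp A 𝒰 → B ∈ 𝒱 → B' ∈ rightPerp A 𝒰 → B' ∈ 𝒱 →
      torsJoin A {Tgen A B, 𝒰} = torsJoin A {Tgen A B', 𝒰} →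
      Nonempty (B ≃ₗ[A] B')) := by
  have : IsArtinianRing A := IsArtinianRing.of_finite k A
  have : IsNoetherianRing A := inferInstance
  refine ⟨?_, ?_, ?_⟩
  · intro B hbr hBU hB
    have hJ : IsTorsionClass A (torsJoin A {Tgen A B, 𝒰}) :=
      torsAux_join h𝒱 (torsAux_le h𝒱 hB h𝒰𝒱)
    have hJV : torsJoin A {Tgen A B, 𝒰} ⊆ 𝒱 := torsAux_join_le h𝒱 hB h𝒰𝒱
    refine ⟨hJ, torsAux_U 𝒰 B, hJV, _, torsAux_perp hJ B, ?_, ?_, ?_⟩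
    · exact fun X hX => ⟨torsAux_U 𝒰 B hX, hBU.2 X hX⟩
    · exact fun X hX => hJV hX.1
    · intro 𝒴 h𝒴 hU𝒴 _
      constructor
      · intro hlt X hX
        refine ⟨hlt.1 hX, fun f => ?_⟩
        by_contra hf
        have hs := torsAux_surj h𝒱 h𝒰𝒱 hbr hBU hB (hlt.1 hX) f hf
        exact hlt.2 (torsAux_join_le h𝒴 (h𝒴.2.2.2.1 X hX B f hs) hU𝒴)
      · intro hle
        refine ⟨fun X hX => (hle hX).1, fun hge => ?_⟩
        have h0 := (hle (hge (torsAux_mem 𝒰 B))).2 LinearMap.id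
        have := hbr.2.1
        obtain ⟨x, hx⟩ := exists_ne (0 : B)
        exact hx (by simpa using LinearMap.congr_fun h0 x)
  · rintro 𝒥 ⟨hJ, hUJ, hJV, 𝒮, hS, hUS, hSV, h⟩
    have hlt : 𝒮 ⊂ 𝒥 := (h 𝒮 hS hUS hSV).2 subset_rfl
    obtain ⟨B, hBJ, hBS, hbr, hBp⟩ := torsAux_brick hJ hS hlt.2
    refine ⟨B, hbr, ⟨hBp.1, fun X hX => hBp.2 X (hUS hX)⟩, hJV hBJ, ?_⟩
    have hle : torsJoin A {Tgen A B, 𝒰} ⊆ 𝒥 := torsAux_join_le hJ hBJ hUJ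
    by_contra hne
    have := (h _ (torsAux_join hJ (torsAux_le hJ hBJ hUJ)) (torsAux_U 𝒰 B) (hle.trans hJV)).1
      (lt_of_le_of_ne hle (Ne.symm hne))
    exact hBS (this (torsAux_mem 𝒰 B))
  · intro B B' hbr hbr' hBU hB hBU' hB' heq
    have key : ∀ C C' : ModuleCat.{0} A, IsBrick A C' → C ∈ 𝒱 → C' ∈ rightPerp A 𝒰 → C' ∈ 𝒱 →
        torsJoin A {Tgen A C, 𝒰} = torsJoin A {Tgen A C', 𝒰} →
        ∃ f : C →ₗ[A] C', Function.Surjective f := by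
      intro C C' hbr' hC hCU' hC' heq
      obtain ⟨f, hf⟩ := torsAux_hom h𝒱 h𝒰𝒱 hC (heq ▸ torsAux_mem 𝒰 C') hCU'.2 hbr'.2.1
      exact ⟨f, torsAux_surj h𝒱 h𝒰𝒱 hbr' hCU' hC' (heq ▸ torsAux_mem 𝒰 C) f hf⟩
    obtain ⟨f, hf⟩ := key B B' hbr' hB hBU' hB' heq
    obtain ⟨g, hg⟩ := key B' B hbr hB' hBU hB heq.symm
    have hne : g ∘ₗ f ≠ 0 := by
      intro h0
      have := hbr.2.1
      obtain ⟨x, hx⟩ := exists_ne (0 : B)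
      obtain ⟨y, rfl⟩ := (hg.comp hf) x
      exact hx (by simpa using LinearMap.congr_fun h0 y)
    have hinj : Function.Injective f :=
      Function.Injective.of_comp (f := g) (hbr.2.2 _ hne).1
    exact ⟨LinearEquiv.ofBijective f ⟨hinj, hf⟩⟩
end

section
/- (Demonet–Iyama–Reading–Reiten–Thomas) The lattice tors A is weakly atomic: for any torsion classes 𝒰 ⊊ 𝒱 in mod A, there exist torsion classes 𝒳, 𝒴 with 𝒰 ⊆ 𝒳 ⋖ 𝒴 ⊆ 𝒱, i.e. the interval [𝒰, 𝒱] contains a covering pair of tors A. -/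
open CategoryTheory

theorem tors_weakly_atomic
    (k A : Type) [Field k] [Ring A] [Algebra k A] [FiniteDimensional k A]
    (𝒰 𝒱 : Set (ModuleCat.{0} A))
    (h𝒰 : IsTorsionClass A 𝒰) (h𝒱 : IsTorsionClass A 𝒱) (h : 𝒰 ⊂ 𝒱) :
    ∃ 𝒳 𝒴, IsTorsionClass A 𝒳 ∧ IsTorsionClass A 𝒴 ∧
      𝒰 ⊆ 𝒳 ∧ 𝒳 ⊂ 𝒴 ∧ 𝒴 ⊆ 𝒱 ∧
      ∀ 𝒵, IsTorsionClass A 𝒵 → 𝒳 ⊂ 𝒵 → 𝒵 ⊂ 𝒴 → False := by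
  obtain ⟨M, hMV, hMU⟩ := Set.exists_of_ssubset h
  -- choose a maximal torsion class in the interval that does not contain `M`
  obtain ⟨𝒳, hU𝒳, hmax⟩ := zorn_subset_nonempty
    {𝒯 : Set (ModuleCat.{0} A) | IsTorsionClass A 𝒯 ∧ 𝒰 ⊆ 𝒯 ∧ 𝒯 ⊆ 𝒱 ∧ M ∉ 𝒯}
    (by
      intro c hc hchain hne
      obtain ⟨T₀, hT₀⟩ := hne
      refine ⟨⋃₀ c, ⟨⟨?_, ?_, ?_, ?_, ?_⟩, ?_, ?_, ?_⟩, fun s hs => Set.subset_sUnion_of_mem hs⟩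
      · rintro N ⟨T, hT, hN⟩
        exact (hc hT).1.1 N hN
      · rintro N ⟨T, hT, hN⟩ N' e
        exact ⟨T, hT, (hc hT).1.2.1 N hN N' e⟩
      · obtain ⟨Z, hZ, hs⟩ := (hc hT₀).1.2.2.1
        exact ⟨Z, ⟨T₀, hT₀, hZ⟩, hs⟩
      · rintro N ⟨T, hT, hN⟩ N' f hf
        exact ⟨T, hT, (hc hT).1.2.2.2.1 N hN N' f hf⟩
      · rintro X Y Z ⟨T, hT, hX⟩ ⟨T', hT', hZ⟩ f g hf hg hfg
        rcases hchain.total hT hT' with hle | hle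
        · exact ⟨T', hT', (hc hT').1.2.2.2.2 X Y Z (hle hX) hZ f g hf hg hfg⟩
        · exact ⟨T, hT, (hc hT).1.2.2.2.2 X Y Z hX (hle hZ) f g hf hg hfg⟩
      · exact fun N hN => ⟨T₀, hT₀, (hc hT₀).2.1 hN⟩
      · rintro N ⟨T, hT, hN⟩
        exact (hc hT).2.2.1 hN
      · rintro ⟨T, hT, hN⟩
        exact (hc hT).2.2.2 hN)
    𝒰 ⟨h𝒰, subset_rfl, h.1, hMU⟩
  obtain ⟨h𝒳, -, h𝒳V, hM𝒳⟩ := hmax.prop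
  -- the smallest torsion class containing `𝒳` and `M`
  have hYV : TgenSet A (insert M 𝒳) ⊆ 𝒱 := fun N hN =>
    hN 𝒱 h𝒱 (Set.insert_subset hMV h𝒳V)
  have hMY : M ∈ TgenSet A (insert M 𝒳) := fun T _ hs => hs (Set.mem_insert _ _)
  have hXY : 𝒳 ⊆ TgenSet A (insert M 𝒳) := fun N hN T _ hs => hs (Set.mem_insert_of_mem _ hN)
  refine ⟨𝒳, TgenSet A (insert M 𝒳), h𝒳, ⟨?_, ?_, ?_, ?_, ?_⟩, hU𝒳,
    ⟨hXY, fun hle => hM𝒳 (hle hMY)⟩, hYV, ?_⟩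
  · exact fun N hN => h𝒱.1 N (hYV hN)
  · exact fun N hN N' e T hT hs => hT.2.1 N (hN T hT hs) N' e
  · obtain ⟨Z, hZ, hs⟩ := h𝒳.2.2.1
    exact ⟨Z, hXY hZ, hs⟩
  · exact fun N hN N' f hf T hT hs => hT.2.2.2.1 N (hN T hT hs) N' f hf
  · exact fun X Y Z hX hZ f g hf hg hfg T hT hs =>
      hT.2.2.2.2 X Y Z (hX T hT hs) (hZ T hT hs) f g hf hg hfg
  · intro 𝒵 h𝒵 hXZ hZY
    by_cases hMZ : M ∈ 𝒵
    · exact hZY.2 fun N hN => hN 𝒵 h𝒵 (Set.insert_subset hMZ hXZ.1)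
    · exact hXZ.2 (hmax.le_of_ge ⟨h𝒵, hU𝒳.trans hXZ.1, hZY.1.trans hYV, hMZ⟩ hXZ.1)
end
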